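/- arXiv:2304.07532 — 2 statements merged into one kernel-verified Lean document; each statement's English description precedes it below -/
import Mathlib

section
/- Let d ≥ 1 and let 1 < β_1 ≤ β_2 ≤ … ≤ β_d be real numbers, and let T be the diagonal self-map of the torus 𝕋^d acting coordinatewise as the β_i-transformation, i.e. (T(x))_i = T_{β_i}(x_i) for 1 ≤ i ≤ d. Let ψ : ℕ → (0,1] and set τ := liminf_{n→∞} (−log ψ(n))/n. Then the Hausdorff dimension of the set H_d(T,ψ) := {x = (x_1,…,x_d) ∈ 𝕋^d : ∏_{i=1}^d |T_{β_i}^n(x_i) − x_i| < ψ(n) for infinitely many n ∈ ℕ} equals d − 1 + (log β_d)/(τ + log β_d), where the fraction is interpreted as 0 when τ = ∞. -/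
open Filter MeasureTheory
open scoped ENNReal

/-- The β-transformation `x ↦ βx - ⌊βx⌋` on `[0,1)`. -/
noncomputable def betaT (β : ℝ) : ℝ → ℝ := fun x => Int.fract (β * x)

/-- The usual metric on the torus `𝕋 = ℝ/ℤ`: distance from `a - b` to the nearest integer. -/
noncomputable def tdist (a b : ℝ) : ℝ := ⨅ k : ℤ, |a - b - (k : ℝ)|

lemma betaT_iter_mem (β : ℝ) (n : ℕ) {x : ℝ} (hx : x ∈ Set.Ico (0:ℝ) 1) :
    (betaT β)^[n] x ∈ Set.Ico (0:ℝ) 1 := by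
  cases n with
  | zero => simpa using hx
  | succ n =>
    rw [Function.iterate_succ_apply']
    exact ⟨Int.fract_nonneg _, Int.fract_lt_one _⟩

lemma betaT_iter_le {β : ℝ} (hβ : 1 < β) (n : ℕ) {x : ℝ} (hx : x ∈ Set.Ico (0:ℝ) 1) :
    (betaT β)^[n] x ≤ β ^ n * x := by
  induction n with
  | zero => simp
  | succ n ih =>
    rw [Function.iterate_succ_apply']
    have h0 := (betaT_iter_mem β n hx).1
    have h1 : betaT β ((betaT β)^[n] x) ≤ β * (betaT β)^[n] x := by
      unfold betaT
      have := Int.floor_nonneg.2 (mul_nonneg (by linarith : (0:ℝ) ≤ β) h0)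
      have h2 : (0:ℝ) ≤ (⌊β * (betaT β)^[n] x⌋ : ℝ) := by exact_mod_cast this
      have := Int.self_sub_floor (β * (betaT β)^[n] x)
      unfold betaT at *
      linarith
    calc _ ≤ β * (betaT β)^[n] x := h1
      _ ≤ β * (β ^ n * x) := by gcongr
      _ = _ := by ring

lemma fract_eq_sub {a t : ℝ} (h0 : 0 ≤ t) (h : t ≤ Int.fract a) :
    Int.fract (a - t) = Int.fract a - t := by
  rw [Int.fract_eq_iff]
  refine ⟨by linarith, by linarith [Int.fract_lt_one a], ⌊a⌋, ?_⟩
  have := Int.self_sub_floor a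
  linarith

lemma betaT_iter_affine {β : ℝ} (hβ : 1 < β) (n : ℕ) {x y : ℝ} (hx : x ∈ Set.Ico (0:ℝ) 1)
    (hyx : y ≤ x) (h : β ^ n * (x - y) ≤ (betaT β)^[n] x) :
    (betaT β)^[n] y = (betaT β)^[n] x - β ^ n * (x - y) := by
  induction n with
  | zero => simp
  | succ n ih =>
    rw [Function.iterate_succ_apply'] at h ⊢
    rw [Function.iterate_succ_apply']
    have h0 := (betaT_iter_mem β n hx).1
    have h1 : betaT β ((betaT β)^[n] x) ≤ β * (betaT β)^[n] x := by
      have := Int.floor_nonneg.2 (mul_nonneg (by linarith : (0:ℝ) ≤ β) h0)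
      have h2 : (0:ℝ) ≤ (⌊β * (betaT β)^[n] x⌋ : ℝ) := by exact_mod_cast this
      have := Int.self_sub_floor (β * (betaT β)^[n] x)
      unfold betaT at *
      linarith
    have h3 : β ^ n * (x - y) ≤ (betaT β)^[n] x := by
      have : β * (β ^ n * (x - y)) ≤ β * (betaT β)^[n] x := by
        calc _ = β ^ (n+1) * (x - y) := by ring
          _ ≤ _ := h.trans h1
      exact le_of_mul_le_mul_left this (by linarith)
    rw [ih h3]
    have h4 : β * ((betaT β)^[n] x - β ^ n * (x - y)) =
      β * (betaT β)^[n] x - β ^ (n+1) * (x - y) := by ring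
    have h5 : 0 ≤ β ^ (n+1) * (x - y) := mul_nonneg (by positivity) (by linarith)
    conv_lhs => unfold betaT
    have := fract_eq_sub h5 (show _ ≤ Int.fract (β * (betaT β)^[n] x) from h)
    rw [← h4] at this
    exact this

lemma betaT_left_end {β : ℝ} (hβ : 1 < β) (n : ℕ) {x : ℝ} (hx : x ∈ Set.Ico (0:ℝ) 1) :
    (x - (betaT β)^[n] x / β ^ n) ∈ Set.Ico (0:ℝ) 1 ∧
      (betaT β)^[n] (x - (betaT β)^[n] x / β ^ n) = 0 := by
  have hb : 0 < β ^ n := by positivity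
  have h0 := (betaT_iter_mem β n hx).1
  have h1 : 0 ≤ (betaT β)^[n] x / β ^ n := by positivity
  have h2 : (betaT β)^[n] x / β ^ n ≤ x := by
    rw [div_le_iff₀ hb, mul_comm]; exact betaT_iter_le hβ n hx
  refine ⟨⟨by linarith, by linarith [hx.2]⟩, ?_⟩
  have h3 : β ^ n * (x - (x - (betaT β)^[n] x / β ^ n)) = (betaT β)^[n] x := by
    field_simp; ring
  rw [betaT_iter_affine hβ n hx (by linarith) h3.le, h3]; ring

/-- `p` is a point whose orbit hits `0` for the first time at time `j`. -/
def IsLev (β : ℝ) (j : ℕ) (p : ℝ) : Prop :=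
  p ∈ Set.Ico (0:ℝ) 1 ∧ (betaT β)^[j] p = 0 ∧ ∀ i < j, (betaT β)^[i] p ≠ 0

lemma exists_lev {β : ℝ} {n : ℕ} {p : ℝ} (hp : p ∈ Set.Ico (0:ℝ) 1) (h : (betaT β)^[n] p = 0) :
    ∃ j ≤ n, IsLev β j p := by
  classical
  have hex : ∃ j, (betaT β)^[j] p = 0 := ⟨n, h⟩
  exact ⟨Nat.find hex, Nat.find_min' hex h, hp, Nat.find_spec hex, fun i hi => Nat.find_min hex hi⟩

lemma IsLev.full {β : ℝ} (hβ : 1 < β) {k : ℕ} {p : ℝ} (hp : IsLev β (k+1) p) :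
    (β ^ (k+1))⁻¹ ≤ p ∧ ∀ z, p - (β ^ (k+1))⁻¹ ≤ z → z < p →
      (betaT β)^[k+1] z = 1 - β ^ (k+1) * (p - z) := by
  obtain ⟨hp1, hp0, hpn⟩ := hp
  have hb : 0 < β ^ (k+1) := by positivity
  have hbk : 0 < β ^ k := by positivity
  have hk := hpn k (Nat.lt_succ_self k)
  have hkm := betaT_iter_mem β k hp1
  have hkpos : 0 < (betaT β)^[k] p := lt_of_le_of_ne hkm.1 (Ne.symm hk)
  rw [Function.iterate_succ_apply'] at hp0
  have hj : β * (betaT β)^[k] p = (⌊β * (betaT β)^[k] p⌋ : ℝ) := by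
    have := Int.self_sub_floor (β * (betaT β)^[k] p)
    unfold betaT at *
    linarith
  have hj1 : 1 ≤ ⌊β * (betaT β)^[k] p⌋ := by
    have : (0:ℝ) < (⌊β * (betaT β)^[k] p⌋ : ℝ) := by rw [← hj]; positivity
    have : 0 < ⌊β * (betaT β)^[k] p⌋ := by exact_mod_cast this
    omega
  have hj1' : (1:ℝ) ≤ β * (betaT β)^[k] p := by rw [hj]; exact_mod_cast hj1
  constructor
  · rw [inv_le_iff_one_le_mul₀ hb]
    calc (1:ℝ) ≤ β * (betaT β)^[k] p := hj1'
      _ ≤ β * (β ^ k * p) := by gcongr; exact betaT_iter_le hβ k hp1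
      _ = _ := by ring
  · intro z hz1 hz2
    have h1 : β ^ (k+1) * (p - z) ≤ 1 := by
      calc β ^ (k+1) * (p - z) ≤ β ^ (k+1) * (β ^ (k+1))⁻¹ := by gcongr; linarith
        _ = 1 := by field_simp
    have h0 : 0 < β ^ (k+1) * (p - z) := mul_pos hb (by linarith)
    have h2 : β ^ k * (p - z) ≤ (betaT β)^[k] p := by
      have : β * (β ^ k * (p - z)) ≤ β * (betaT β)^[k] p := by
        calc _ = β ^ (k+1) * (p - z) := by ring
          _ ≤ _ := h1.trans hj1'
      exact le_of_mul_le_mul_left this (by linarith)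
    rw [Function.iterate_succ_apply', betaT_iter_affine hβ k hp1 hz2.le h2]
    unfold betaT
    rw [Int.fract_eq_iff]
    refine ⟨by linarith, by linarith, ⌊β * (betaT β)^[k] p⌋ - 1, ?_⟩
    push_cast
    rw [← hj]
    unfold betaT
    ring

lemma IsLev.sep {β : ℝ} (hβ : 1 < β) {j : ℕ} {p q : ℝ} (hp : IsLev β j p) (hq : IsLev β j q)
    (hqp : q < p) : (β ^ j)⁻¹ ≤ p - q := by
  cases j with
  | zero =>
    have h1 := hp.2.1
    have h2 := hq.2.1
    simp at h1 h2
    linarith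
  | succ k =>
    by_contra hcon
    push Not at hcon
    have := (hp.full hβ).2 q (by linarith) hqp
    rw [hq.2.1] at this
    have hb : 0 < β ^ (k+1) := by positivity
    have h1 : β ^ (k+1) * (p - q) < β ^ (k+1) * (β ^ (k+1))⁻¹ := by gcongr
    rw [mul_inv_cancel₀ hb.ne'] at h1
    linarith

lemma betaT_iter_small {β : ℝ} (hβ : 1 < β) (n : ℕ) {y : ℝ} (hy : 0 ≤ y) (h : β ^ n * y < 1) :
    (betaT β)^[n] y = β ^ n * y := by
  induction n with
  | zero => simp
  | succ n ih =>
    have h1 : β ^ n * y < 1 := by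
      refine lt_of_le_of_lt ?_ h
      gcongr
      · linarith
      · omega
    rw [Function.iterate_succ_apply', ih h1]
    unfold betaT
    rw [Int.fract_eq_self.2]
    · ring
    · exact ⟨by positivity, by rw [← mul_assoc, ← pow_succ']; exact h⟩

/-- Full cylinders of every large order. -/
lemma IsLev.full' {β : ℝ} (hβ : 1 < β) {k n : ℕ} {p : ℝ} (hp : IsLev β (k+1) p) (hkn : k + 1 ≤ n)
    {z : ℝ} (hz1 : p - (β ^ (k+1))⁻¹ ≤ z) (hz2 : z < p - (β ^ (k+1))⁻¹ + (β ^ n)⁻¹) :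
    (betaT β)^[n] z = β ^ n * (z - (p - (β ^ (k+1))⁻¹)) := by
  have hb : 0 < β ^ (k+1) := by positivity
  have hbn : 0 < β ^ n := by positivity
  have h1 : (β ^ n)⁻¹ ≤ (β ^ (k+1))⁻¹ := by
    gcongr
    · linarith
  have h2 := (hp.full hβ).2 z hz1 (by linarith)
  obtain ⟨l, rfl⟩ := Nat.exists_eq_add_of_le' hkn
  rw [Function.iterate_add_apply, h2]
  have h3 : 1 - β ^ (k+1) * (p - z) = β ^ (k+1) * (z - (p - (β ^ (k+1))⁻¹)) := by
    field_simp; ring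
  rw [h3]
  have h4 : 0 ≤ z - (p - (β ^ (k+1))⁻¹) := by linarith
  have h5 : β ^ l * (β ^ (k+1) * (z - (p - (β ^ (k+1))⁻¹))) =
      β ^ (l + (k+1)) * (z - (p - (β ^ (k+1))⁻¹)) := by rw [pow_add]; ring
  rw [betaT_iter_small hβ l (by positivity), h5]
  rw [h5]
  calc _ < β ^ (l + (k+1)) * (β ^ (l + (k+1)))⁻¹ := by gcongr; linarith
    _ = 1 := by field_simp

lemma tdist_le (a b : ℝ) (k : ℤ) : tdist a b ≤ |a - b - k| :=
  ciInf_le ⟨0, by rintro _ ⟨k, rfl⟩; exact abs_nonneg _⟩ k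

lemma tdist_nonneg (a b : ℝ) : 0 ≤ tdist a b := le_ciInf fun _ => abs_nonneg _

lemma tdist_le_one (a b : ℝ) : tdist a b ≤ 1 := by
  refine (tdist_le a b ⌊a - b⌋).trans ?_
  rw [Int.self_sub_floor, abs_of_nonneg (Int.fract_nonneg _)]
  exact (Int.fract_lt_one _).le

lemma exists_of_tdist_lt {a b c : ℝ} (h : tdist a b < c) : ∃ k : ℤ, |a - b - k| < c :=
  exists_lt_of_ciInf_lt h

/-- Ubiquity of the near-return sets. -/
lemma ubiq {β : ℝ} (hβ : 1 < β) {n k0 : ℕ} (hk : ((k0:ℝ) + 3) * (β ^ n)⁻¹ ≤ (β ^ k0)⁻¹)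
    {ψ : ℝ} (hψ0 : 0 < ψ) (hψ1 : ψ ≤ 1) {a : ℝ} (ha0 : 0 ≤ a) (ha1 : a + 2 * (β ^ k0)⁻¹ < 1) :
    ∃ b, a ≤ b ∧ b + ψ * (β ^ n)⁻¹ / 3 ≤ a + 2 * (β ^ k0)⁻¹ ∧
      ∀ x, b ≤ x → x ≤ b + ψ * (β ^ n)⁻¹ / 3 → tdist ((betaT β)^[n] x) x < ψ := by
  have hbn : 0 < β ^ n := by positivity
  have hbk : 0 < β ^ k0 := by positivity
  have hin : 0 < (β ^ n)⁻¹ := by positivity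
  have hik : 0 < (β ^ k0)⁻¹ := by positivity
  set e := (β ^ n)⁻¹ with he
  set u := a + (β ^ k0)⁻¹ with hu
  -- points
  set X : ℕ → ℝ := fun i => u + (i + 1) * e with hX
  set P : ℕ → ℝ := fun i => X i - (betaT β)^[n] (X i) / β ^ n with hP
  have hXm : ∀ i ≤ k0 + 1, X i ∈ Set.Ico (0:ℝ) 1 := by
    intro i hi
    have hi' : (i:ℝ) ≤ k0 + 1 := by exact_mod_cast hi
    have h1 : ((i:ℝ) + 1) * e ≤ (k0 + 3) * e := by gcongr ?_ * e; linarith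
    have h2 : 0 ≤ ((i:ℝ) + 1) * e := by positivity
    constructor
    · simp only [hX, hu]; linarith
    · simp only [hX, hu]; linarith
  have hPl : ∀ i ≤ k0 + 1, u + i * e < P i ∧ P i ≤ u + (i+1) * e := by
    intro i hi
    have hm := betaT_iter_mem β n (hXm i hi)
    have h1 : (betaT β)^[n] (X i) / β ^ n < e := by
      rw [he, div_eq_mul_inv]; 
      calc _ < 1 * (β ^ n)⁻¹ := by gcongr; exact hm.2
        _ = _ := one_mul _
    have h2 : 0 ≤ (betaT β)^[n] (X i) / β ^ n := div_nonneg hm.1 hbn.le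
    have h3 : X i = u + i * e + e := by simp only [hX]; ring
    have h4 : P i = X i - (betaT β)^[n] (X i) / β ^ n := rfl
    constructor
    · linarith
    · linarith
  have hlev : ∀ i ≤ k0 + 1, ∃ j ≤ n, IsLev β j (P i) := by
    intro i hi
    have := betaT_left_end hβ n (hXm i hi)
    exact exists_lev this.1 this.2
  have key : ∃ i ≤ k0 + 1, ∃ j ≤ n, IsLev β j (P i) ∧ k0 < j := by
    by_contra hcon
    push Not at hcon
    choose! J hJn hJ using hlev
    have hJk : ∀ i ≤ k0 + 1, J i ≤ k0 := fun i hi => hcon i hi (J i) (hJn i hi) (hJ i hi)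
    have hmaps : ∀ i ∈ Finset.range (k0 + 2), J i ∈ Finset.range (k0 + 1) := by
      intro i hi
      simp only [Finset.mem_range] at hi ⊢
      have := hJk i (by omega); omega
    obtain ⟨i, hi, i', hi', hne, heq⟩ :=
      Finset.exists_ne_map_eq_of_card_lt_of_maps_to (by simp) hmaps
    wlog hlt : i < i' generalizing i i'
    · exact this i' hi' i hi hne.symm heq.symm (by omega)
    simp only [Finset.mem_range] at hi hi'
    have h1 := hPl i (by omega)
    have h2 := hPl i' (by omega)
    have hii : (i:ℝ) + 1 ≤ i' := by exact_mod_cast hlt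
    have hik' : (i':ℝ) ≤ k0 + 1 := by exact_mod_cast (by omega : i' ≤ k0 + 1)
    have h3 : ((i:ℝ) + 1) * e ≤ i' * e := by gcongr
    have hlt' : P i < P i' := by linarith
    have hs1 := hJ i (by omega)
    have hs2 := hJ i' (by omega)
    rw [← heq] at hs2
    have hsep := hs2.sep hβ hs1 hlt'
    have h4 : (β ^ k0)⁻¹ ≤ (β ^ (J i))⁻¹ := by
      gcongr
      · linarith
      · exact hJk i (by omega)
    have h5 : 0 ≤ (i:ℝ) * e := by positivity
    have h6 : ((i':ℝ) + 1) * e ≤ (k0 + 2) * e := by gcongr ?_ * e; linarith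
    linarith
  obtain ⟨i, hi, j, hjn, hlev, hkj⟩ := key
  obtain ⟨k, rfl⟩ : ∃ k, j = k + 1 := ⟨j - 1, by omega⟩
  set q := P i - (β ^ (k+1))⁻¹ with hq
  have hPi := hPl i hi
  have hi' : (i:ℝ) ≤ k0 + 1 := by exact_mod_cast hi
  have h6 : ((i:ℝ) + 1) * e ≤ (k0 + 2) * e := by gcongr ?_ * e; linarith
  have hie : 0 ≤ (i:ℝ) * e := by positivity
  have hkk : (β ^ (k+1))⁻¹ ≤ (β ^ k0)⁻¹ := by
    gcongr
    · linarith
  have hkn : e ≤ (β ^ (k+1))⁻¹ := by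
    rw [he]; gcongr
    · linarith
  have hqa : a < q := by linarith
  have hqe : q + e ≤ a + 2 * (β ^ k0)⁻¹ := by linarith
  have hq1 : q + e < 1 := by linarith
  have hn1 : 1 < β ^ n := one_lt_pow₀ hβ (by omega)
  have hne : β ^ n * e = 1 := by rw [he]; field_simp
  have hT : ∀ z, q ≤ z → z < q + e → (betaT β)^[n] z = β ^ n * (z - q) := 
    fun z h1 h2 => hlev.full' hβ hjn h1 h2
  set x0 := q + q / (β ^ n - 1) with hx0
  have hm : 0 < β ^ n - 1 := by linarith
  have hx0q : q ≤ x0 := by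
    have : 0 ≤ q / (β ^ n - 1) := div_nonneg (by linarith) hm.le
    linarith
  have hx0e : x0 < q + e := by
    have : q / (β ^ n - 1) < e := by
      rw [div_lt_iff₀ hm]
      nlinarith
    linarith
  have hest : ∀ x, q ≤ x → x < q + e → |x - x0| ≤ ψ * e / 3 → tdist ((betaT β)^[n] x) x < ψ := by
    intro x h1 h2 h3
    refine (tdist_le _ _ 0).trans_lt ?_
    rw [hT x h1 h2]
    have : β ^ n * (x - q) - x - ((0:ℤ):ℝ) = (β ^ n - 1) * (x - x0) := by
      rw [hx0]; field_simp; push_cast; ring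
    rw [this, abs_mul, abs_of_pos hm]
    calc (β ^ n - 1) * |x - x0| ≤ β ^ n * (ψ * e / 3) := by gcongr; linarith
      _ = ψ / 3 * (β ^ n * e) := by ring
      _ = ψ / 3 := by rw [hne]; ring
      _ < ψ := by linarith
  have hψe : ψ * e ≤ e := by nlinarith
  have hψe0 : 0 < ψ * e := by positivity
  by_cases hc : x0 ≤ q + e / 2
  · refine ⟨x0, by linarith, by linarith, fun x h1 h2 => hest x (by linarith) (by linarith) ?_⟩
    rw [abs_le]; constructor <;> linarith
  · push Not at hc
    refine ⟨x0 - ψ * e / 3, by linarith, by linarith, 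
      fun x h1 h2 => hest x (by linarith) (by linarith) ?_⟩
    rw [abs_le]; constructor <;> linarith
/-- Abstract Cantor-type construction. -/
lemma cantor_param {s : ℝ} (hs0 : 0 ≤ s) (hs1 : s ≤ 1) (E : ℕ → Set ℝ)
    (H : ∀ ρ : ℝ, 0 < ρ → ρ ≤ 1 → ∀ N : ℕ, ∃ n > N, ∃ h ρ' : ℝ, 0 < ρ' ∧ ρ' ≤ h ∧ 4 * h ≤ ρ ∧
      4 * h ≤ ρ * ρ' ^ s ∧ ∀ a, 0 ≤ a → a + h < 1 → ∃ b, a ≤ b ∧ b + ρ' ≤ a + h ∧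
        ∀ x, b ≤ x → x ≤ b + ρ' → x ∈ E n) :
    ∃ φ : ℝ → ℝ, (∀ u ∈ Set.Ico (0:ℝ) 1, φ u ∈ Set.Ico (0:ℝ) 1 ∧ ∃ᶠ n in atTop, φ u ∈ E n) ∧
      ∀ u ∈ Set.Ico (0:ℝ) 1, ∀ v ∈ Set.Ico (0:ℝ) 1, |u - v| ≤ 8 * |φ u - φ v| ^ s := by
  -- the sequence of scales
  have H' : ∀ st : {ρ : ℝ // 0 < ρ ∧ ρ ≤ 1} × ℕ, ∃ (st' : {ρ : ℝ // 0 < ρ ∧ ρ ≤ 1} × ℕ) (h : ℝ),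
      st.2 < st'.2 ∧ st'.1.1 ≤ h ∧ 4 * h ≤ st.1.1 ∧ 4 * h ≤ st.1.1 * st'.1.1 ^ s ∧
      ∀ a, ∃ b, 0 ≤ a → a + h < 1 → a ≤ b ∧ b + st'.1.1 ≤ a + h ∧
        ∀ x, b ≤ x → x ≤ b + st'.1.1 → x ∈ E st'.2 := by
    rintro ⟨⟨ρ, h0, h1⟩, N⟩
    obtain ⟨n, hn, h, ρ', h2, h3, h4, h5, h6⟩ := H ρ h0 h1 N
    refine ⟨⟨⟨ρ', h2, by linarith⟩, n⟩, h, hn, h3, h4, h5, fun a => ?_⟩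
    by_cases hc : 0 ≤ a ∧ a + h < 1
    · obtain ⟨b, hb⟩ := h6 a hc.1 hc.2
      exact ⟨b, fun _ _ => hb⟩
    · exact ⟨0, fun h1 h2 => absurd ⟨h1, h2⟩ hc⟩
  choose nx hh hA hB hC hD hE using H'
  choose BB hBB using hE
  set sq : ℕ → {ρ : ℝ // 0 < ρ ∧ ρ ≤ 1} × ℕ := fun k => nx^[k] (⟨1, one_pos, le_rfl⟩, 0) with hsq
  have hsqs : ∀ k, sq (k+1) = nx (sq k) := fun k => Function.iterate_succ_apply' _ _ _
  obtain ⟨ρ, hρ⟩ : ∃ ρ : ℕ → ℝ, ∀ k, ρ k = (sq k).1.1 := ⟨_, fun _ => rfl⟩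
  obtain ⟨nn, hnn⟩ : ∃ nn : ℕ → ℕ, ∀ k, nn k = (sq k).2 := ⟨_, fun _ => rfl⟩
  obtain ⟨h, hh'⟩ : ∃ h : ℕ → ℝ, ∀ k, h k = hh (sq k) := ⟨_, fun _ => rfl⟩
  obtain ⟨B, hB'⟩ : ∃ B : ℕ → ℝ → ℝ, ∀ k, B k = BB (sq k) := ⟨_, fun _ => rfl⟩
  have hρ0 : ρ 0 = 1 := by rw [hρ]; rfl
  have hρpos : ∀ k, 0 < ρ k := fun k => by rw [hρ]; exact (sq k).1.2.1
  have hnlt : ∀ k, nn k < nn (k+1) := fun k => by rw [hnn, hnn, hsqs]; exact hA _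
  have hρh : ∀ k, ρ (k+1) ≤ h k := fun k => by rw [hρ, hh', hsqs]; exact hB _
  have hhρ : ∀ k, 4 * h k ≤ ρ k := fun k => by rw [hρ, hh']; exact hC _
  have hhρs : ∀ k, 4 * h k ≤ ρ k * ρ (k+1) ^ s := fun k => by rw [hρ, hρ, hh', hsqs]; exact hD _
  have hBp : ∀ k a, 0 ≤ a → a + h k < 1 → a ≤ B k a ∧ B k a + ρ (k+1) ≤ a + h k ∧
      ∀ x, B k a ≤ x → x ≤ B k a + ρ (k+1) → x ∈ E (nn (k+1)) := fun k a h0 h1 => by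
    rw [hρ, hB', hh', hnn, hsqs]
    rw [hh'] at h1
    exact hBB _ a h0 h1
  clear hA hB hC hD hBB hB' hh' 
  have hhpos : ∀ k, 0 < h k := fun k => (hρpos (k+1)).trans_le (hρh k)
  obtain ⟨M, hM⟩ : ∃ M : ℕ → ℕ, ∀ k, M k = ⌊ρ k / (2 * h k)⌋₊ := ⟨_, fun _ => rfl⟩
  have hx2 : ∀ k, 2 ≤ ρ k / (2 * h k) := fun k => by
    rw [le_div_iff₀ (by have := hhpos k; positivity)]; linarith [hhρ k]
  have hM2 : ∀ k, 2 ≤ M k := fun k => by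
    rw [hM]; exact Nat.le_floor (by exact_mod_cast hx2 k)
  have hMup : ∀ k, 2 * h k * M k ≤ ρ k := fun k => by
    have h1 : (M k : ℝ) ≤ ρ k / (2 * h k) := by
      rw [hM]; exact Nat.floor_le (by linarith [hx2 k])
    rw [le_div_iff₀ (by have := hhpos k; positivity)] at h1
    linarith
  have hMlo : ∀ k, ρ k ≤ 4 * h k * M k := fun k => by
    have h1 : ρ k / (2 * h k) < M k + 1 := by
      rw [hM]; exact Nat.lt_floor_add_one _
    have h2 : (1:ℝ) ≤ M k := by exact_mod_cast (by linarith [hM2 k] : 1 ≤ M k)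
    rw [div_lt_iff₀ (by have := hhpos k; positivity)] at h1
    nlinarith [hhpos k]
  -- the coding
  obtain ⟨st, hst0, hsts⟩ : ∃ st : ℝ → ℕ → ℝ × ℝ, (∀ u, st u 0 = (0, u)) ∧
      ∀ u k, st u (k+1) = (B k ((st u k).1 + 2 * h k * ⌊(M k : ℝ) * (st u k).2⌋),
        Int.fract ((M k : ℝ) * (st u k).2)) :=
    ⟨fun u k => Nat.rec (0, u) (fun k p => (B k (p.1 + 2 * h k * ⌊(M k : ℝ) * p.2⌋),
        Int.fract ((M k : ℝ) * p.2))) k, fun _ => rfl, fun _ _ => rfl⟩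
  obtain ⟨b, hb⟩ : ∃ b : ℝ → ℕ → ℝ, ∀ u k, b u k = (st u k).1 := ⟨_, fun _ _ => rfl⟩
  obtain ⟨w, hw⟩ : ∃ w : ℝ → ℕ → ℝ, ∀ u k, w u k = (st u k).2 := ⟨_, fun _ _ => rfl⟩
  obtain ⟨D, hD⟩ : ∃ D : ℝ → ℕ → ℤ, ∀ u k, D u k = ⌊(M k : ℝ) * w u k⌋ := ⟨_, fun _ _ => rfl⟩
  have hb0 : ∀ u, b u 0 = 0 := fun u => by rw [hb, hst0]
  have hw0 : ∀ u, w u 0 = u := fun u => by rw [hw, hst0]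
  have hbs : ∀ u k, b u (k+1) = B k (b u k + 2 * h k * D u k) := fun u k => by
    rw [hb, hsts, hb, hD, hw]
  have hws : ∀ u k, w u (k+1) = M k * w u k - D u k := fun u k => by
    rw [hw, hsts, hD, hw, Int.self_sub_floor]
  have hwm : ∀ u ∈ Set.Ico (0:ℝ) 1, ∀ k, w u k ∈ Set.Ico (0:ℝ) 1 := by
    intro u hu k
    cases k with
    | zero => rw [hw0]; exact hu
    | succ k =>
      rw [hws, hD, Int.self_sub_floor]
      exact ⟨Int.fract_nonneg _, Int.fract_lt_one _⟩
  clear hb hw hst0 hsts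
  have hD0 : ∀ u ∈ Set.Ico (0:ℝ) 1, ∀ k, 0 ≤ (D u k : ℝ) := by
    intro u hu k
    rw [hD]
    have : 0 ≤ ⌊(M k : ℝ) * w u k⌋ := Int.floor_nonneg.2 (mul_nonneg (by positivity) (hwm u hu k).1)
    exact_mod_cast this
  have hDM : ∀ u ∈ Set.Ico (0:ℝ) 1, ∀ k, (D u k : ℝ) + 1 ≤ M k := by
    intro u hu k
    have h2 : (0:ℝ) < M k := by exact_mod_cast (by linarith [hM2 k] : 0 < M k)
    have : D u k < M k := by
      rw [hD, Int.floor_lt]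
      push_cast
      nlinarith [(hwm u hu k).2]
    exact_mod_cast this
  have hinv : ∀ u ∈ Set.Ico (0:ℝ) 1, ∀ k, 0 ≤ b u k ∧ b u k + ρ k ≤ 1 := by
    intro u hu k
    induction k with
    | zero => rw [hb0, hρ0]; norm_num
    | succ k ih =>
      have h1 := hD0 u hu k
      have h2 := hDM u hu k
      have h3 := hhpos k
      have h4 : 2 * h k * (D u k + 1) ≤ 2 * h k * M k := by gcongr
      have h5 := hMup k
      have h6 : 0 ≤ 2 * h k * D u k := by positivity
      have := hBp k (b u k + 2 * h k * D u k) (by linarith) (by linarith)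
      rw [hbs]
      exact ⟨by linarith, by linarith⟩
  have hstep : ∀ u ∈ Set.Ico (0:ℝ) 1, ∀ k, b u k + 2 * h k * D u k ≤ b u (k+1) ∧
      b u (k+1) + ρ (k+1) ≤ b u k + 2 * h k * D u k + h k ∧
      b u k + 2 * h k * D u k + h k < b u k + ρ k ∧
      ∀ x, b u (k+1) ≤ x → x ≤ b u (k+1) + ρ (k+1) → x ∈ E (nn (k+1)) := by
    intro u hu k
    have h1 := hD0 u hu k
    have h2 := hDM u hu k
    have h3 := hhpos k
    have h4 : 2 * h k * (D u k + 1) ≤ 2 * h k * M k := by gcongr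
    have h5 := hMup k
    have h6 : 0 ≤ 2 * h k * D u k := by positivity
    have ih := hinv u hu k
    have := hBp k (b u k + 2 * h k * D u k) (by linarith) (by linarith)
    rw [hbs]
    exact ⟨this.1, this.2.1, by linarith, this.2.2⟩
  have hmono : ∀ u ∈ Set.Ico (0:ℝ) 1, Monotone (b u) := fun u hu =>
    monotone_nat_of_le_succ fun k => by
      have h6 : 0 ≤ 2 * h k * D u k := by have := hhpos k; have := hD0 u hu k; positivity
      linarith [(hstep u hu k).1]
  have hanti : ∀ u ∈ Set.Ico (0:ℝ) 1, Antitone (fun k => b u k + ρ k) := fun u hu =>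
    antitone_nat_of_succ_le fun k => by
      have := hstep u hu k
      linarith
  set φ : ℝ → ℝ := fun u => ⨆ k, b u k with hφ
  have hcross : ∀ u ∈ Set.Ico (0:ℝ) 1, ∀ j k, b u j ≤ b u k + ρ k := by
    intro u hu j k
    have h1 := hmono u hu (le_max_left j k)
    have h2 := hanti u hu (le_max_right j k)
    have h3 := hρpos (max j k)
    simp only at h2
    linarith
  have hφlo : ∀ u ∈ Set.Ico (0:ℝ) 1, ∀ k, b u k ≤ φ u := fun u hu k =>
    le_ciSup (f := b u) ⟨b u 0 + ρ 0, by rintro _ ⟨j, rfl⟩; exact hcross u hu j 0⟩ k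
  have hφup : ∀ u ∈ Set.Ico (0:ℝ) 1, ∀ k, φ u ≤ b u k + ρ k := fun u hu k =>
    ciSup_le fun j => hcross u hu j k
  obtain ⟨Q, hQ⟩ : ∃ Q : ℕ → ℝ, ∀ k, Q k = ∏ j ∈ Finset.range k, (M j : ℝ) := ⟨_, fun _ => rfl⟩
  have hQs : ∀ k, Q (k+1) = Q k * M k := fun k => by rw [hQ, hQ, Finset.prod_range_succ]
  have hQ0 : Q 0 = 1 := by rw [hQ]; simp
  have hM2' : ∀ k, (2:ℝ) ≤ M k := fun k => by exact_mod_cast hM2 k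
  have hQ2 : ∀ k, (2:ℝ) ^ k ≤ Q k := by
    intro k
    induction k with
    | zero => rw [hQ0]; simp
    | succ k ih => rw [hQs, pow_succ]; exact mul_le_mul ih (hM2' k) (by norm_num) (le_trans (by positivity) ih)
  have hQ1 : ∀ k, 1 ≤ Q k := fun k => (one_le_pow₀ (by norm_num)).trans (hQ2 k)
  have hQρ : ∀ k, 1 ≤ Q k * ρ k ^ s := by
    intro k
    cases k with
    | zero => rw [hQ0, hρ0]; simp
    | succ k =>
      have h1 : 0 < ρ (k+1) ^ s := Real.rpow_pos_of_pos (hρpos _) _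
      have h2 : 4 * h k ≤ 4 * h k * (M k * ρ (k+1) ^ s) := by
        calc 4 * h k ≤ ρ k * ρ (k+1) ^ s := hhρs k
          _ ≤ (4 * h k * M k) * ρ (k+1) ^ s := by gcongr; exact hMlo k
          _ = _ := by ring
      have h3 : 1 ≤ M k * ρ (k+1) ^ s := by
        have h4 := hhpos k
        by_contra hcon
        push Not at hcon
        nlinarith
      rw [hQs]
      have h5 := hQ1 k
      have : 0 ≤ M k * ρ (k+1) ^ s := by linarith
      calc (1:ℝ) ≤ M k * ρ (k+1) ^ s := h3
        _ ≤ Q k * (M k * ρ (k+1) ^ s) := le_mul_of_one_le_left this h5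
        _ = _ := by ring
  refine ⟨φ, ?_, ?_⟩
  · intro u hu
    refine ⟨⟨(hinv u hu 0).1.trans (hφlo u hu 0), ?_⟩, ?_⟩
    · have h1 := hφup u hu 1
      have h2 := hstep u hu 0
      have h3 := hinv u hu 0
      simp only [zero_add] at h2
      linarith
    · rw [Filter.frequently_atTop]
      intro N
      have hge : ∀ k, k ≤ nn k := by
        intro k
        induction k with
        | zero => simp
        | succ k ih => have := hnlt k; omega
      exact ⟨nn (N+1), by have := hge (N+1); omega,
        (hstep u hu N).2.2.2 _ (hφlo u hu _) (hφup u hu _)⟩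
  · have hpre : ∀ u v k, (∀ j < k, D u j = D v j) → b u k = b v k ∧
        w u k - w v k = Q k * (u - v) := by
      intro u v k
      induction k with
      | zero => intro _; rw [hb0, hb0, hw0, hw0, hQ0]; simp
      | succ k ih =>
        intro hj
        obtain ⟨h1, h2⟩ := ih fun j hj' => hj j (by omega)
        have h3 := hj k (by omega)
        rw [hbs, hbs, hws, hws, h1, h3, hQs]
        refine ⟨rfl, ?_⟩
        linear_combination (M k : ℝ) * h2
    have main : ∀ u ∈ Set.Ico (0:ℝ) 1, ∀ v ∈ Set.Ico (0:ℝ) 1, ∀ k, (∀ j < k, D u j = D v j) →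
        D u k < D v k → |u - v| ≤ 8 * |φ u - φ v| ^ s := by
      intro u hu v hv k hj hlt
      obtain ⟨h1, h2⟩ := hpre u v k hj
      set Δ : ℝ := D v k - D u k with hΔ
      have hΔ1 : 1 ≤ Δ := by
        have : (D u k : ℝ) + 1 ≤ D v k := by exact_mod_cast hlt
        linarith
      have hΔM : Δ ≤ M k := by
        have := hD0 u hu k
        have := hDM v hv k
        linarith
      have hwu := hwm u hu (k+1)
      have hwv := hwm v hv (k+1)
      rw [hws] at hwu hwv
      have hMp : (0:ℝ) < M k := by linarith [hM2' k]
      have hQp : 0 < Q k := by linarith [hQ1 k]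
      have hhp := hhpos k
      have h3 : |M k * w u k - M k * w v k| ≤ 2 * Δ := by
        rw [abs_le]; constructor <;> linarith [hwu.1, hwu.2, hwv.1, hwv.2]
      have h4 : M k * Q k * |u - v| ≤ 2 * Δ := by
        have : M k * w u k - M k * w v k = M k * Q k * (u - v) := by
          linear_combination (M k : ℝ) * h2
        rw [this, abs_mul, abs_of_pos (by positivity)] at h3
        exact h3
      have h5 : h k * Δ ≤ |φ u - φ v| := by
        rw [abs_sub_comm]
        refine le_trans ?_ (le_abs_self _)
        have e1 := hφlo v hv (k+1)
        have e2 := hφup u hu (k+1)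
        have e3 := (hstep v hv k).1
        have e4 := (hstep u hu k).2.1
        nlinarith
      have h6 : Δ ≤ M k * Q k * (4 * (h k * Δ) ^ s) := by
        have f1 : Δ / M k ≤ (Δ / M k) ^ s := by
          have : Δ / M k ≤ 1 := by rw [div_le_one hMp]; exact hΔM
          calc Δ / M k = (Δ / M k) ^ (1:ℝ) := by simp
            _ ≤ _ := Real.rpow_le_rpow_of_exponent_ge (by positivity) this hs1
        have f2 : 1 ≤ Q k * (4 * h k * M k) ^ s := by
          refine (hQρ k).trans ?_
          gcongr
          · exact (hρpos k).le
          · exact hMlo k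
        have f3 : (4:ℝ) ^ s ≤ 4 := by
          calc (4:ℝ) ^ s ≤ 4 ^ (1:ℝ) := Real.rpow_le_rpow_of_exponent_le (by norm_num) hs1
            _ = 4 := by simp
        calc Δ = M k * (Δ / M k * 1) := by field_simp
          _ ≤ M k * ((Δ / M k) ^ s * (Q k * (4 * h k * M k) ^ s)) := by gcongr
          _ = M k * Q k * ((Δ / M k) ^ s * (4 * h k * M k) ^ s) := by ring
          _ = M k * Q k * (4 * (h k * Δ)) ^ s := by
            rw [← Real.mul_rpow (by positivity) (by positivity)]
            congr 2
            field_simp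
          _ = M k * Q k * (4 ^ s * (h k * Δ) ^ s) := by
            rw [Real.mul_rpow (by positivity) (by positivity)]
          _ ≤ _ := by gcongr
      have h7 : M k * Q k * |u - v| ≤ M k * Q k * (8 * (h k * Δ) ^ s) := by
        calc _ ≤ 2 * Δ := h4
          _ ≤ 2 * (M k * Q k * (4 * (h k * Δ) ^ s)) := by gcongr
          _ = _ := by ring
      have h8 := le_of_mul_le_mul_left h7 (by positivity)
      refine h8.trans ?_
      gcongr
    intro u hu v hv
    by_cases hall : ∀ k, D u k = D v k
    · have : u = v := by
        by_contra hne
        have hpos : 0 < |u - v| := abs_pos.2 (sub_ne_zero.2 hne)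
        obtain ⟨k, hk⟩ := pow_unbounded_of_one_lt (1 / |u - v|) (by norm_num : (1:ℝ) < 2)
        have h1 := (hpre u v k fun j _ => hall j).2
        have h2 : |w u k - w v k| < 1 := by
          rw [abs_lt]
          have := hwm u hu k
          have := hwm v hv k
          simp only [Set.mem_Ico] at *
          constructor <;> linarith
        rw [h1, abs_mul, abs_of_pos (by linarith [hQ1 k])] at h2
        rw [div_lt_iff₀ hpos] at hk
        nlinarith [hQ2 k]
      subst this
      simp only [sub_self, abs_zero]
      positivity
    · push Not at hall
      classical
      have hm : ∀ j < Nat.find hall, D u j = D v j := fun j hj => by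
        by_contra hc
        exact Nat.find_min hall hj hc
      rcases lt_or_gt_of_ne (Nat.find_spec hall) with hlt | hlt
      · exact main u hu v hv _ hm hlt
      · rw [abs_sub_comm, abs_sub_comm (φ u)]
        exact main v hv u hu _ (fun j hj => (hm j hj).symm) hlt
/-- Lower bound for the Hausdorff dimension of a product-like set. -/
lemma lower_dim (m : ℕ) {s : NNReal} (φ : ℝ → ℝ) (A : Set (Fin (m+1) → ℝ))
    (hA : ∀ w : Fin (m+1) → ℝ, (∀ i, w i ∈ Set.Ico (0:ℝ) 1) →
      (fun i => if i = Fin.last m then φ (w i) else w i) ∈ A)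
    (hφ : ∀ u ∈ Set.Ico (0:ℝ) 1, ∀ v ∈ Set.Ico (0:ℝ) 1, |u - v| ≤ 8 * |φ u - φ v| ^ (s:ℝ)) :
    (m : ℝ≥0∞) + s ≤ dimH A := by
  have key : (1 : ℝ≥0∞) ≤ 8 * μH[(((m:NNReal) + s : NNReal) : ℝ)] A := by
    rw [MeasureTheory.Measure.hausdorffMeasure_apply]
    have h1 : (1 : ℝ≥0∞) / 8 ≤ ⨅ (t : ℕ → Set (Fin (m+1) → ℝ)) (_ : A ⊆ ⋃ n, t n)
        (_ : ∀ n, Metric.ediam (t n) ≤ 1),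
          ∑' n, ⨆ _ : (t n).Nonempty, Metric.ediam (t n) ^ (((m:NNReal) + s : NNReal) : ℝ) := by
      refine le_iInf₂ fun t ht => le_iInf fun _ => ?_
      rw [ENNReal.div_le_iff (by norm_num) (by norm_num), mul_comm, ← ENNReal.tsum_mul_left]
      set Φ : (Fin (m+1) → ℝ) → (Fin (m+1) → ℝ) :=
        fun w i => if i = Fin.last m then φ (w i) else w i with hΦ
      set cube : Set (Fin (m+1) → ℝ) := Set.univ.pi fun _ => Set.Ico (0:ℝ) 1 with hcube
      have hvol : volume cube = 1 := by
        rw [hcube, volume_pi_pi]; simp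
      have hcov : cube ⊆ ⋃ n, cube ∩ Φ ⁻¹' (t n) := by
        intro w hw
        have hw' : ∀ i, w i ∈ Set.Ico (0:ℝ) 1 := fun i => hw i (Set.mem_univ i)
        obtain ⟨n, hn⟩ := Set.mem_iUnion.1 (ht (hA w hw'))
        exact Set.mem_iUnion.2 ⟨n, hw, hn⟩
      calc (1 : ℝ≥0∞) = volume cube := hvol.symm
        _ ≤ volume (⋃ n, cube ∩ Φ ⁻¹' (t n)) := measure_mono hcov
        _ ≤ ∑' n, volume (cube ∩ Φ ⁻¹' (t n)) := measure_iUnion_le _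
        _ ≤ _ := by
          refine ENNReal.tsum_le_tsum fun n => ?_
          rcases Set.eq_empty_or_nonempty (t n) with he | hne
          · simp [he]
          have : (⨆ _ : (t n).Nonempty, Metric.ediam (t n) ^ (((m:NNReal) + s : NNReal) : ℝ)) =
            Metric.ediam (t n) ^ (((m:NNReal) + s : NNReal) : ℝ) := by simp [hne]
          rw [this]
          refine (Real.volume_pi_le_prod_diam _).trans ?_
          rw [Fin.prod_univ_castSucc]
          have e1 : ∀ i : Fin m, Metric.ediam (Function.eval i.castSucc '' (cube ∩ Φ ⁻¹' (t n))) ≤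
              Metric.ediam (t n) := by
            intro i
            refine Metric.ediam_le ?_
            rintro _ ⟨w, hw, rfl⟩ _ ⟨w', hw', rfl⟩
            refine le_trans ?_ (Metric.edist_le_ediam_of_mem hw.2 hw'.2)
            refine le_trans ?_ (edist_le_pi_edist _ _ i.castSucc)
            simp [hΦ, (Fin.castSucc_lt_last i).ne]
          have e2 : Metric.ediam (Function.eval (Fin.last m) '' (cube ∩ Φ ⁻¹' (t n))) ≤
              8 * Metric.ediam (t n) ^ (s:ℝ) := by
            refine Metric.ediam_le ?_
            rintro _ ⟨w, hw, rfl⟩ _ ⟨w', hw', rfl⟩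
            have h3 := hφ (w (Fin.last m)) (hw.1 _ (Set.mem_univ _)) (w' (Fin.last m))
              (hw'.1 _ (Set.mem_univ _))
            have h4 : edist (φ (w (Fin.last m))) (φ (w' (Fin.last m))) ≤ Metric.ediam (t n) := by
              refine le_trans ?_ (Metric.edist_le_ediam_of_mem hw.2 hw'.2)
              refine le_trans ?_ (edist_le_pi_edist _ _ (Fin.last m))
              simp [hΦ]
            simp only [Function.eval]
            rw [edist_dist, Real.dist_eq]
            refine (ENNReal.ofReal_le_ofReal h3).trans ?_
            rw [ENNReal.ofReal_mul (by norm_num),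
              ← ENNReal.ofReal_rpow_of_nonneg (abs_nonneg _) s.coe_nonneg, ← Real.dist_eq, ← edist_dist]
            simp only [ENNReal.ofReal_ofNat]
            gcongr
          calc _ ≤ (∏ _i : Fin m, Metric.ediam (t n)) * (8 * Metric.ediam (t n) ^ (s:ℝ)) := by
                gcongr with i
                · exact e1 i
            _ = 8 * (Metric.ediam (t n) ^ (m:ℝ) * Metric.ediam (t n) ^ (s:ℝ)) := by
              rw [Finset.prod_const, Finset.card_univ, Fintype.card_fin, ENNReal.rpow_natCast]; ring
            _ = _ := by
              rw [← ENNReal.rpow_add_of_nonneg _ _ (by positivity) s.coe_nonneg]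
              simp
    have h2 : (1 : ℝ≥0∞) / 8 ≤ ⨆ (r : ℝ≥0∞) (_ : 0 < r),
        ⨅ (t : ℕ → Set (Fin (m+1) → ℝ)) (_ : A ⊆ ⋃ n, t n) (_ : ∀ n, Metric.ediam (t n) ≤ r),
          ∑' n, ⨆ _ : (t n).Nonempty, Metric.ediam (t n) ^ (((m:NNReal) + s : NNReal) : ℝ) :=
      h1.trans (le_iSup₂ (f := fun (r : ℝ≥0∞) (_ : 0 < r) =>
        ⨅ (t : ℕ → Set (Fin (m+1) → ℝ)) (_ : A ⊆ ⋃ n, t n) (_ : ∀ n, Metric.ediam (t n) ≤ r),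
          ∑' n, ⨆ _ : (t n).Nonempty, Metric.ediam (t n) ^ (((m:NNReal) + s : NNReal) : ℝ))
          1 one_pos)
    rw [ENNReal.div_le_iff (by norm_num) (by norm_num), mul_comm] at h2
    exact h2
  have hne : μH[(((m:NNReal) + s : NNReal) : ℝ)] A ≠ 0 := by
    intro h0
    rw [h0] at key
    simp at key
  have := le_dimH_of_hausdorffMeasure_ne_zero hne
  simpa using this

lemma exists_phi {β : ℝ} (hβ : 1 < β) {ψ : ℕ → ℝ} (hψ : ∀ n, ψ n ∈ Set.Ioc (0 : ℝ) 1)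
    {τ s : ℝ} (hτ : 0 ≤ τ) (hfreq : ∃ᶠ n : ℕ in atTop, Real.exp (-(n * τ)) ≤ ψ n) (hs0 : 0 ≤ s)
    (hs : s * (τ + Real.log β) < Real.log β) :
    ∃ φ : ℝ → ℝ, (∀ u ∈ Set.Ico (0:ℝ) 1, φ u ∈ Set.Ico (0:ℝ) 1 ∧
        ∃ᶠ n in atTop, tdist ((betaT β)^[n] (φ u)) (φ u) < ψ n) ∧
      ∀ u ∈ Set.Ico (0:ℝ) 1, ∀ v ∈ Set.Ico (0:ℝ) 1, |u - v| ≤ 8 * |φ u - φ v| ^ s := by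
  set L := Real.log β with hL
  have hLpos : 0 < L := Real.log_pos hβ
  have hβL : ∀ n : ℕ, β ^ n = Real.exp (n * L) := fun n => by
    rw [Real.exp_nat_mul, hL, Real.exp_log (by linarith)]
  have hs1 : s ≤ 1 := by
    by_contra hc
    push Not at hc
    nlinarith
  refine cantor_param hs0 hs1 (fun n => {x | tdist ((betaT β)^[n] x) x < ψ n}) ?_
  intro ρ hρ0 hρ1 N
  obtain ⟨c, hc1, hc2⟩ := exists_between hs
  have hc0 : 0 < c := lt_of_le_of_lt (by positivity) hc1
  set γ := L - c with hγ
  set γ' := c - s * (τ + L) with hγ'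
  have hγ0 : 0 < γ := by linarith
  have hγ'0 : 0 < γ' := by linarith
  have hev : ∀ᶠ n : ℕ in atTop, N < n ∧ 4 ≤ (n:ℝ) ∧ 4 * Real.exp L / γ ^ 2 ≤ n ∧
      24 / (ρ * γ') ≤ n := by
    have ht := tendsto_natCast_atTop_atTop (R := ℝ)
    filter_upwards [eventually_gt_atTop N, ht.eventually_ge_atTop 4,
      ht.eventually_ge_atTop (4 * Real.exp L / γ ^ 2), ht.eventually_ge_atTop (24 / (ρ * γ'))]
      with n h1 h2 h3 h4
    exact ⟨h1, h2, h3, h4⟩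
  obtain ⟨n, hn, hnN, hn4, hn1, hn2⟩ := (hfreq.and_eventually hev).exists
  set k0 := ⌈(n:ℝ) * c / L⌉₊ with hk0
  have hk0lo : (n:ℝ) * c / L ≤ k0 := Nat.le_ceil _
  have hk0up : (k0:ℝ) < n * c / L + 1 := Nat.ceil_lt_add_one (by positivity)
  have hk0lo' : (n:ℝ) * c ≤ k0 * L := by rwa [div_le_iff₀ hLpos] at hk0lo
  have hk0up' : (k0:ℝ) * L < n * c + L := by
    have : (k0:ℝ) * L < (n * c / L + 1) * L := by gcongr
    have h2 : ((n:ℝ) * c / L + 1) * L = n * c + L := by field_simp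
    linarith
  have hk0n : (k0:ℝ) ≤ n + 1 := by
    have : (n:ℝ) * c / L ≤ n := by rw [div_le_iff₀ hLpos]; gcongr
    linarith
  have hexp1 : ((n:ℝ) + 4) * Real.exp L ≤ Real.exp (n * γ) := by
    have h1 := Real.quadratic_le_exp_of_nonneg (show 0 ≤ (n:ℝ) * γ by positivity)
    rw [div_le_iff₀ (by positivity)] at hn1
    have h2 := Real.exp_pos L
    have h3 : 0 ≤ (n:ℝ) * γ := by positivity
    nlinarith
  have hexp2 : 24 ≤ ρ * Real.exp (n * γ') := by
    have h1 := Real.add_one_le_exp ((n:ℝ) * γ')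
    rw [div_le_iff₀ (by positivity)] at hn2
    nlinarith
  have hcond : ((k0:ℝ) + 3) * (β ^ n)⁻¹ ≤ (β ^ k0)⁻¹ := by
    rw [hβL, hβL, ← Real.exp_neg, ← Real.exp_neg]
    calc ((k0:ℝ) + 3) * Real.exp (-(n * L)) ≤ (n + 4) * Real.exp (-(n * L)) := by
          gcongr ?_ * _; linarith
      _ = ((n:ℝ) + 4) * Real.exp L * Real.exp (-(n * L) - L) := by
        rw [mul_assoc, ← Real.exp_add]; congr 2; ring
      _ ≤ Real.exp (n * γ) * Real.exp (-(n * L) - L) := by gcongr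
      _ = Real.exp (-(n * c + L)) := by rw [← Real.exp_add]; congr 1; rw [hγ]; ring
      _ ≤ _ := by gcongr
  have hψn := hψ n
  have hbn : 0 < (β ^ n)⁻¹ := by positivity
  have hbk : 0 < (β ^ k0)⁻¹ := by positivity
  have hbn1 : (β ^ n)⁻¹ ≤ 1 := inv_le_one_of_one_le₀ (one_le_pow₀ hβ.le)
  have hρ'0 : 0 < ψ n * (β ^ n)⁻¹ / 3 := by have := hψn.1; positivity
  have hψb : ψ n * (β ^ n)⁻¹ ≤ (β ^ n)⁻¹ := by nlinarith [hψn.2]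
  have hρ'h : ψ n * (β ^ n)⁻¹ / 3 ≤ 2 * (β ^ k0)⁻¹ := by
    have : (β ^ n)⁻¹ ≤ ((k0:ℝ) + 3) * (β ^ n)⁻¹ := by
      have : (0:ℝ) ≤ k0 := by positivity
      nlinarith
    linarith
  have hmain : 4 * (2 * (β ^ k0)⁻¹) ≤ ρ * (ψ n * (β ^ n)⁻¹ / 3) ^ s := by
    have h1 : Real.exp (-(n * (τ + L))) / 3 ≤ ψ n * (β ^ n)⁻¹ / 3 := by
      have : Real.exp (-(n * (τ + L))) = Real.exp (-(n * τ)) * (β ^ n)⁻¹ := by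
        rw [hβL, ← Real.exp_neg, ← Real.exp_add]; congr 1; ring
      rw [this]; gcongr
    have h2 : Real.exp (-(n * (s * (τ + L)))) / 3 ≤ (Real.exp (-(n * (τ + L))) / 3) ^ s := by
      rw [Real.div_rpow (Real.exp_pos _).le (by norm_num), ← Real.exp_mul]
      have h3 : (3:ℝ) ^ s ≤ 3 := by
        calc (3:ℝ) ^ s ≤ 3 ^ (1:ℝ) := Real.rpow_le_rpow_of_exponent_le (by norm_num) hs1
          _ = 3 := by simp
      have h4 : -((n:ℝ) * (τ + L)) * s = -(n * (s * (τ + L))) := by ring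
      rw [h4]
      gcongr
    have h3 : (β ^ k0)⁻¹ ≤ Real.exp (-(n * c)) := by
      rw [hβL, ← Real.exp_neg]; gcongr
    calc 4 * (2 * (β ^ k0)⁻¹) ≤ 4 * (2 * Real.exp (-(n * c))) := by gcongr
      _ = 24 * Real.exp (-(n * c)) / 3 := by ring
      _ ≤ (ρ * Real.exp (n * γ')) * Real.exp (-(n * c)) / 3 := by gcongr
      _ = ρ * (Real.exp (-(n * (s * (τ + L)))) / 3) := by
        rw [mul_assoc, ← Real.exp_add, mul_div_assoc]; congr 4; rw [hγ']; ring
      _ ≤ ρ * (ψ n * (β ^ n)⁻¹ / 3) ^ s := by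
        gcongr
        refine h2.trans ?_
        gcongr
  refine ⟨n, hnN, 2 * (β ^ k0)⁻¹, ψ n * (β ^ n)⁻¹ / 3, hρ'0, hρ'h, ?_, hmain, ?_⟩
  · refine hmain.trans ?_
    have : (ψ n * (β ^ n)⁻¹ / 3) ^ s ≤ 1 := Real.rpow_le_one hρ'0.le (by linarith) hs0
    nlinarith
  · intro a ha0 ha1
    exact ubiq hβ hcond hψn.1 hψn.2 ha0 ha1
lemma lev_finset {β : ℝ} (hβ : 1 < β) (j : ℕ) :
    ∃ P : Finset ℝ, (∀ p, IsLev β j p → p ∈ P) ∧ (P.card : ℝ) ≤ 2 * β ^ j := by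
  have hb : 0 < β ^ j := by positivity
  have hb1 : 1 ≤ β ^ j := one_le_pow₀ hβ.le
  have hmaps : Set.MapsTo (fun p : ℝ => ⌊p * β ^ j⌋₊) {p | IsLev β j p}
      (Finset.range (⌊β ^ j⌋₊ + 1) : Finset ℕ) := by
    intro p hp
    simp only [Finset.coe_range, Set.mem_Iio]
    refine Nat.lt_succ_of_le (Nat.floor_le_floor ?_)
    have := hp.1.2
    nlinarith
  have hinj : Set.InjOn (fun p : ℝ => ⌊p * β ^ j⌋₊) {p | IsLev β j p} := by
    have key : ∀ p q, IsLev β j p → IsLev β j q → ⌊p * β ^ j⌋₊ = ⌊q * β ^ j⌋₊ → ¬ q < p := by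
      intro p q hp hq h hlt
      have h1 := hp.sep hβ hq hlt
      have h2 : 1 ≤ (p - q) * β ^ j := by rwa [inv_le_iff_one_le_mul₀ hb] at h1
      have h3 := Nat.lt_floor_add_one (p * β ^ j)
      have h4 := Nat.floor_le (mul_nonneg hq.1.1 hb.le)
      rw [h] at h3
      linarith
    intro p hp q hq h
    rcases lt_trichotomy p q with hlt | he | hlt
    · exact absurd hlt (key q p hq hp h.symm)
    · exact he
    · exact absurd hlt (key p q hp hq h)
  have hfin : {p | IsLev β j p}.Finite := Set.Finite.of_injOn hmaps hinj (Finset.finite_toSet _)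
  refine ⟨hfin.toFinset, fun p hp => by simpa using hp, ?_⟩
  have hc : hfin.toFinset.card ≤ (Finset.range (⌊β ^ j⌋₊ + 1)).card :=
    Finset.card_le_card_of_injOn (fun p : ℝ => ⌊p * β ^ j⌋₊)
      (by intro p hp; exact hmaps (by simpa using hp))
      (by intro p hp q hq h; exact hinj (by simpa using hp) (by simpa using hq) h)
  rw [Finset.card_range] at hc
  have hc' : (hfin.toFinset.card : ℝ) ≤ ⌊β ^ j⌋₊ + 1 := by exact_mod_cast hc
  have := Nat.floor_le hb.le
  linarith

lemma zero_finset {β : ℝ} (hβ : 1 < β) (n : ℕ) :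
    ∃ P : Finset ℝ, (∀ p ∈ Set.Ico (0:ℝ) 1, (betaT β)^[n] p = 0 → p ∈ P) ∧
      (P.card : ℝ) ≤ 2 * (n + 1) * β ^ n := by
  classical
  choose P hP hPc using fun j => lev_finset hβ j
  refine ⟨(Finset.range (n+1)).biUnion P, ?_, ?_⟩
  · intro p hp h
    obtain ⟨j, hj, hl⟩ := exists_lev hp h
    exact Finset.mem_biUnion.2 ⟨j, Finset.mem_range.2 (by omega), hP j p hl⟩
  · calc (((Finset.range (n+1)).biUnion P).card : ℝ) ≤ ∑ j ∈ Finset.range (n+1), ((P j).card : ℝ) := by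
          exact_mod_cast Finset.card_biUnion_le
      _ ≤ ∑ j ∈ Finset.range (n+1), 2 * β ^ n := by
        refine Finset.sum_le_sum fun j hj => (hPc j).trans ?_
        have : β ^ j ≤ β ^ n := pow_le_pow_right₀ hβ.le (by have := Finset.mem_range.1 hj; omega)
        linarith
      _ = _ := by simp; ring

lemma cover_one {β : ℝ} (hβ : 1 < β) :
    ∃ C : ℝ, 0 < C ∧ ∀ n : ℕ, 1 ≤ n → ∀ δ r : ℝ, 0 < δ → δ ≤ 1 → 0 < r → r ≤ δ * (β ^ n)⁻¹ →
      ∃ P : Finset ℝ, (∀ x ∈ Set.Ico (0:ℝ) 1, tdist ((betaT β)^[n] x) x ≤ δ →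
        ∃ c ∈ P, |x - c| ≤ r) ∧ (P.card : ℝ) ≤ C * (n + 1) * δ / r := by
  classical
  set K := 2 * β / (β - 1) with hK
  have hβ1 : 0 < β - 1 := by linarith
  have hK0 : 0 < K := by positivity
  refine ⟨10 * (2 * K + 5), by positivity, ?_⟩
  intro n hn δ r hδ0 hδ1 hr0 hr
  obtain ⟨Z, hZ, hZc⟩ := zero_finset hβ n
  have hbn : 0 < β ^ n := by positivity
  set e := (β ^ n)⁻¹ with he
  have he0 : 0 < e := by positivity
  have hbn1 : β ≤ β ^ n := le_self_pow₀ hβ.le (by omega)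
  have hm : 0 < β ^ n - 1 := by linarith
  have hne : β ^ n * e = 1 := by rw [he]; field_simp
  have hKe : 2 / (β ^ n - 1) ≤ K * e := by
    rw [div_le_iff₀ hm]
    have : K * e * (β ^ n - 1) = K * (1 - e) := by linear_combination K * hne
    rw [this]
    have h2 : e ≤ β⁻¹ := by rw [he]; gcongr
    have h3 : K * (1 - β⁻¹) = 2 := by rw [hK]; field_simp
    nlinarith
  set J := ⌈K * δ * e / r⌉₊ + 1 with hJ
  have hJr : (J:ℝ) ≤ K * δ * e / r + 2 := by
    have := Nat.ceil_lt_add_one (show 0 ≤ K * δ * e / r by positivity)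
    rw [hJ]; push_cast; linarith
  have hJl : K * δ * e / r + 1 ≤ J := by
    have := Nat.le_ceil (K * δ * e / r)
    rw [hJ]; push_cast; linarith
  refine ⟨((Z ×ˢ (Finset.Icc (-2:ℤ) 2)) ×ˢ (Finset.Icc (-(J:ℤ)) J)).image
    (fun q => (β ^ n * q.1.1 + q.1.2) / (β ^ n - 1) + r * q.2), ?_, ?_⟩
  · intro x hx hd
    obtain ⟨k, hk⟩ := exists_of_tdist_lt (lt_of_le_of_lt hd (by linarith : δ < 2 * δ))
    have hT := betaT_iter_mem β n hx
    obtain ⟨hp1, hp2⟩ := betaT_left_end hβ n hx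
    set p := x - (betaT β)^[n] x / β ^ n with hp
    have hTx : (betaT β)^[n] x = β ^ n * (x - p) := by rw [hp]; field_simp; ring
    have hkm : k ∈ Finset.Icc (-2:ℤ) 2 := by
      rw [abs_lt] at hk
      have h1 : (k:ℝ) < 3 := by linarith [hT.1, hT.2, hx.1, hx.2]
      have h2 : (-3:ℝ) < k := by linarith [hT.1, hT.2, hx.1, hx.2]
      have h1' : k < 3 := by exact_mod_cast h1
      have h2' : -3 < k := by exact_mod_cast h2
      rw [Finset.mem_Icc]; omega
    set x0 := (β ^ n * p + k) / (β ^ n - 1) with hx0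
    have hxx : |x - x0| ≤ K * δ * e := by
      have h1 : (betaT β)^[n] x - x - k = (β ^ n - 1) * (x - x0) := by
        rw [hTx, hx0]; field_simp; ring
      rw [h1, abs_mul, abs_of_pos hm] at hk
      have h2 : |x - x0| ≤ 2 * δ / (β ^ n - 1) := by
        rw [le_div_iff₀ hm]; linarith
      calc |x - x0| ≤ 2 * δ / (β ^ n - 1) := h2
        _ = 2 / (β ^ n - 1) * δ := by ring
        _ ≤ K * e * δ := by gcongr
        _ = _ := by ring
    set j := ⌊(x - x0) / r⌋ with hj
    have hj1 : (j:ℝ) ≤ (x - x0) / r := Int.floor_le _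
    have hj2 : (x - x0) / r < j + 1 := Int.lt_floor_add_one _
    have habs : |(x - x0) / r| ≤ K * δ * e / r := by
      rw [abs_div, abs_of_pos hr0]; gcongr
    rw [abs_le] at habs
    have hjm : j ∈ Finset.Icc (-(J:ℤ)) J := by
      rw [Finset.mem_Icc]
      constructor
      · have : (-(J:ℝ)) ≤ j := by linarith
        exact_mod_cast this
      · have : (j:ℝ) ≤ J := by linarith
        exact_mod_cast this
    refine ⟨x0 + r * j, Finset.mem_image.2 ⟨((p, k), j), ?_, rfl⟩, ?_⟩
    · simp only [Finset.mem_product]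
      exact ⟨⟨hZ p hp1 hp2, hkm⟩, hjm⟩
    · rw [le_div_iff₀ hr0] at hj1
      rw [div_lt_iff₀ hr0] at hj2
      rw [abs_le]; constructor <;> linarith
  · refine le_trans (Nat.cast_le.2 Finset.card_image_le) ?_
    rw [Finset.card_product, Finset.card_product]
    have c1 : (Finset.Icc (-2:ℤ) 2).card = 5 := by simp
    have c2 : (Finset.Icc (-(J:ℤ)) J).card = 2 * J + 1 := by
      rw [Int.card_Icc]; omega
    rw [c1, c2]
    push_cast
    have h1 : 1 ≤ δ * e / r := by rw [le_div_iff₀ hr0]; linarith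
    have h2 : (2 * (J:ℝ) + 1) ≤ (2 * K + 5) * (δ * e / r) := by
      have : K * δ * e / r = K * (δ * e / r) := by ring
      rw [this] at hJr
      nlinarith
    calc (Z.card : ℝ) * 5 * (2 * J + 1) ≤ (2 * (n + 1) * β ^ n) * 5 * ((2 * K + 5) * (δ * e / r)) := by
          gcongr
      _ = 10 * (2 * K + 5) * (n + 1) * δ / r * (β ^ n * e) := by ring
      _ = _ := by rw [hne]; ring

lemma upper_E (m : ℕ) (β : Fin (m+1) → ℝ) (hβ : ∀ i, 1 < β i) {L : ℝ} (hL0 : 0 < L)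
    (hL : ∀ i, Real.log (β i) ≤ L) (t : Fin (m+1) → ℝ) (ht : ∀ i, 0 ≤ t i) {θ : NNReal}
    (hθ : L < θ * (∑ i, t i + L)) :
    dimH {x : Fin (m+1) → ℝ | (∀ i, x i ∈ Set.Ico (0 : ℝ) 1) ∧
        (∃ᶠ n : ℕ in atTop, ∀ i, tdist ((betaT (β i))^[n] (x i)) (x i) ≤ Real.exp (-(n * t i)))} ≤
      (m : ℝ≥0∞) + θ := by
  classical
  set T := ∑ i, t i with hT
  have hT0 : 0 ≤ T := Finset.sum_nonneg fun i _ => ht i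
  have htT : ∀ i, t i ≤ T := fun i =>
    Finset.single_le_sum (f := t) (fun i _ => ht i) (Finset.mem_univ i)
  choose C hC0 hC using fun i => cover_one (hβ i)
  set r : ℕ → ℝ := fun n => Real.exp (-(n * (T + L))) with hr
  have hr0 : ∀ n, 0 < r n := fun n => Real.exp_pos _
  have hP : ∀ (i : Fin (m+1)) (n : ℕ), ∃ P : Finset ℝ, 1 ≤ n →
      (∀ x ∈ Set.Ico (0:ℝ) 1, tdist ((betaT (β i))^[n] x) x ≤ Real.exp (-(n * t i)) →
        ∃ c ∈ P, |x - c| ≤ r n) ∧ (P.card : ℝ) ≤ C i * (n + 1) * Real.exp (-(n * t i)) / r n := by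
    intro i n
    by_cases hn : 1 ≤ n
    · have h1 : Real.exp (-(n * t i)) ≤ 1 := by
        rw [Real.exp_le_one_iff]; have := ht i; have : 0 ≤ (n:ℝ) * t i := by positivity
        linarith
      have h2 : r n ≤ Real.exp (-(n * t i)) * (β i ^ n)⁻¹ := by
        have h3 : β i ^ n = Real.exp (n * Real.log (β i)) := by
          rw [Real.exp_nat_mul, Real.exp_log (by linarith [hβ i])]
        rw [h3, ← Real.exp_neg, ← Real.exp_add, hr]
        simp only
        rw [Real.exp_le_exp]
        have h4 : (n:ℝ) * (t i + Real.log (β i)) ≤ n * (T + L) := by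
          gcongr
          · exact htT i
          · exact hL i
        linarith
      obtain ⟨P, hP⟩ := hC i n hn _ (r n) (Real.exp_pos _) h1 (hr0 n) h2
      exact ⟨P, fun _ => hP⟩
    · exact ⟨∅, fun h => absurd h hn⟩
  choose P hP using hP
  set s : NNReal := m + θ with hs
  have hsr : (s:ℝ) = m + θ := by simp [hs]
  set γ := θ * (T + L) - L with hγ
  have hγ0 : 0 < γ := by linarith
  -- the covering family
  set PP : ℕ → Finset (Fin (m+1) → ℝ) := fun n => Fintype.piFinset fun i => P i (n+1) with hPP
  set F : ℕ → ℝ≥0∞ := fun n => ∑' c : {c // c ∈ PP n},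
    Metric.ediam (Metric.closedBall (c : Fin (m+1) → ℝ) (r (n+1))) ^ (s:ℝ) with hF
  have hball : ∀ n (c : Fin (m+1) → ℝ), Metric.ediam (Metric.closedBall c (r n)) ≤
      ENNReal.ofReal (2 * r n) := by
    intro n c
    refine Metric.ediam_le fun x hx y hy => ?_
    rw [edist_dist]
    apply ENNReal.ofReal_le_ofReal
    have := dist_triangle_right x y c
    rw [Metric.mem_closedBall] at hx hy
    linarith
  set a : ℕ → ℝ := fun n => (∏ i, C i) * 2 ^ (s:ℝ) *
    (((n:ℝ) + 1) ^ (m+1) * Real.exp (-(γ * n))) with ha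
  have hFa : ∀ n, F n ≤ ENNReal.ofReal (a (n+1)) := by
    intro n
    have h1 : F n ≤ ((PP n).card : ℝ≥0∞) * ENNReal.ofReal ((2 * r (n+1)) ^ (s:ℝ)) := by
      rw [hF]
      simp only
      rw [tsum_fintype]
      have := Finset.sum_le_card_nsmul (Finset.univ : Finset {c // c ∈ PP n})
        (fun c => Metric.ediam (Metric.closedBall (c : Fin (m+1) → ℝ) (r (n+1))) ^ (s:ℝ))
        (ENNReal.ofReal ((2 * r (n+1)) ^ (s:ℝ))) (by
          intro c _
          rw [← ENNReal.ofReal_rpow_of_nonneg (by have := hr0 (n+1); positivity) s.coe_nonneg]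
          gcongr
          exact hball _ _)
      simpa using this
    refine h1.trans ?_
    rw [← ENNReal.ofReal_natCast, ← ENNReal.ofReal_mul (by positivity)]
    apply ENNReal.ofReal_le_ofReal
    have hr1 := hr0 (n+1)
    have h2 : ((PP n).card : ℝ) ≤
        ∏ i, (C i * (((n+1:ℕ):ℝ) + 1) * Real.exp (-(((n+1:ℕ):ℝ) * t i)) / r (n+1)) := by
      rw [hPP]
      simp only
      rw [Fintype.card_piFinset]
      push_cast
      refine Finset.prod_le_prod (fun i _ => by positivity) fun i _ => ?_
      have := (hP i (n+1) (by omega)).2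
      push_cast at this
      exact this
    generalize n + 1 = N at *
    have h3 : ∏ i, (C i * ((N:ℝ) + 1) * Real.exp (-((N:ℝ) * t i)) / r N) =
        (∏ i, C i) * ((N:ℝ) + 1) ^ (m+1) * Real.exp (-(N * T)) / r N ^ (m+1) := by
      rw [Finset.prod_div_distrib, Finset.prod_mul_distrib, Finset.prod_mul_distrib,
        ← Real.exp_sum]
      simp [hT, Finset.mul_sum]
    have h4 : (2 * r N) ^ (s:ℝ) = 2 ^ (s:ℝ) * Real.exp (-(N * (T + L)) * s) := by
      rw [Real.mul_rpow (by norm_num) hr1.le, hr]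
      simp only
      rw [← Real.exp_mul]
    have h5 : r N ^ (m+1) = Real.exp (-(N * (T + L)) * (m + 1)) := by
      rw [hr]
      simp only
      rw [← Real.exp_nat_mul]
      congr 1
      push_cast
      ring
    rw [h3] at h2
    calc ((PP n).card : ℝ) * (2 * r N) ^ (s:ℝ) 
        ≤ ((∏ i, C i) * ((N:ℝ) + 1) ^ (m+1) * Real.exp (-(N * T)) / r N ^ (m+1)) *
          (2 * r N) ^ (s:ℝ) := by gcongr
      _ = (∏ i, C i) * 2 ^ (s:ℝ) * (((N:ℝ) + 1) ^ (m+1) * (Real.exp (-(N * T)) *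
            Real.exp (-(N * (T + L)) * s) / Real.exp (-(N * (T + L)) * (m + 1)))) := by
        rw [h4, h5]; ring
      _ = a N := by
        rw [ha]
        simp only
        congr 2
        rw [← Real.exp_add, ← Real.exp_sub]
        congr 1
        rw [hsr, hγ]
        ring
  have hasum : Summable a := by
    rw [ha]
    apply Summable.mul_left
    have h1 := (summable_nat_add_iff 1).2 (Real.summable_pow_mul_exp_neg_nat_mul (m+1) hγ0)
    have h2 := h1.mul_left (Real.exp γ)
    refine h2.congr fun n => ?_
    have : Real.exp (-(γ * n)) = Real.exp γ * Real.exp (-γ * ((n+1 : ℕ) : ℝ)) := by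
      rw [← Real.exp_add]; congr 1; push_cast; ring
    rw [this]; push_cast; ring
  have hFsum : ∑' n, F n ≠ ∞ := by
    have h1 : Summable fun n => a (n+1) := (summable_nat_add_iff 1).2 hasum
    refine ne_top_of_le_ne_top ?_ (ENNReal.tsum_le_tsum hFa)
    exact h1.tsum_ofReal_ne_top
  have htend := ENNReal.tendsto_sum_nat_add F hFsum
  have hμ : μH[(s:ℝ)] {x : Fin (m+1) → ℝ | (∀ i, x i ∈ Set.Ico (0 : ℝ) 1) ∧
        (∃ᶠ n : ℕ in atTop, ∀ i, tdist ((betaT (β i))^[n] (x i)) (x i) ≤ Real.exp (-(n * t i)))} ≤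
      0 := by
    have hmain := MeasureTheory.Measure.hausdorffMeasure_le_liminf_tsum
      (ι := fun N : ℕ => Σ n : ℕ, {c // c ∈ PP (n + N)}) (s:ℝ)
      {x : Fin (m+1) → ℝ | (∀ i, x i ∈ Set.Ico (0 : ℝ) 1) ∧
        (∃ᶠ n : ℕ in atTop, ∀ i, tdist ((betaT (β i))^[n] (x i)) (x i) ≤ Real.exp (-(n * t i)))}
      (l := atTop) (fun N => ENNReal.ofReal (2 * r N)) ?_
      (fun N q => Metric.closedBall (q.2 : Fin (m+1) → ℝ) (r (q.1 + N + 1))) ?_ ?_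
    · refine hmain.trans (le_of_eq ?_)
      have : (fun N : ℕ => ∑' q : Σ n : ℕ, {c // c ∈ PP (n + N)},
          Metric.ediam (Metric.closedBall (q.2 : Fin (m+1) → ℝ) (r (q.1 + N + 1))) ^ (s:ℝ)) =
          fun N => ∑' k, F (k + N) := by
        funext N
        rw [ENNReal.tsum_sigma']
      rw [this]
      exact htend.liminf_eq
    · have : Tendsto (fun N : ℕ => 2 * r N) atTop (nhds 0) := by
        have h1 : Tendsto (fun N : ℕ => r N) atTop (nhds 0) := by
          have h2 : Tendsto (fun N : ℕ => (N:ℝ) * (T + L)) atTop atTop :=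
            (tendsto_natCast_atTop_atTop).atTop_mul_const (by linarith)
          exact Real.tendsto_exp_neg_atTop_nhds_zero.comp h2
        simpa using h1.const_mul 2
      simpa using ENNReal.tendsto_ofReal this
    · refine Eventually.of_forall fun N q => (hball _ _).trans ?_
      apply ENNReal.ofReal_le_ofReal
      have : r (q.1 + N + 1) ≤ r N := by
        rw [hr]
        simp only
        rw [Real.exp_le_exp]
        have : (N:ℝ) * (T + L) ≤ ((q.1 + N + 1 : ℕ) : ℝ) * (T + L) := by
          gcongr
          omega
        linarith
      linarith
    · refine Eventually.of_forall fun N x hx => ?_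
      obtain ⟨hx1, hx2⟩ := hx
      obtain ⟨n, hnN, hn⟩ := Filter.frequently_atTop.1 hx2 (N+1)
      obtain ⟨k, rfl⟩ : ∃ k, n = k + N + 1 := ⟨n - N - 1, by omega⟩
      choose c hc1 hc2 using fun i => (hP i (k+N+1) (by omega)).1 (x i) (hx1 i) (hn i)
      refine Set.mem_iUnion.2 ⟨⟨k, ⟨c, ?_⟩⟩, ?_⟩
      · rw [hPP]; exact Fintype.mem_piFinset.2 hc1
      · rw [Metric.mem_closedBall, dist_pi_le_iff (hr0 _).le]
        intro i
        rw [Real.dist_eq]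
        exact hc2 i
  have hz : μH[(s:ℝ)] {x : Fin (m+1) → ℝ | (∀ i, x i ∈ Set.Ico (0 : ℝ) 1) ∧
        (∃ᶠ n : ℕ in atTop, ∀ i, tdist ((betaT (β i))^[n] (x i)) (x i) ≤ Real.exp (-(n * t i)))} ≠
      ∞ := ne_top_of_le_ne_top ENNReal.zero_ne_top hμ
  have := dimH_le_of_hausdorffMeasure_ne_top hz
  simpa [hs] using this

/-- Combinatorial discretisation of the multiplicative condition. -/
lemma exists_exponents (m J : ℕ) {a : ℝ} (ha : 0 < a) (y : Fin (m+1) → ℝ)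
    (hy1 : ∀ i, y i ≤ 1) (hprod : ∏ i, y i < Real.exp (-(a * J))) :
    ∃ j : Fin (m+1) → Fin (J+1), J ≤ ∑ i, (j i : ℕ) + (m+1) ∧
      ∀ i, y i ≤ Real.exp (-(a * (j i : ℕ))) := by
  classical
  let P : Fin (m+1) → ℕ → Prop := fun i k => y i ≤ Real.exp (-(a * k))
  let j : Fin (m+1) → ℕ := fun i => Nat.findGreatest (P i) J
  have hjle : ∀ i, j i ≤ J := fun i => Nat.findGreatest_le J
  have hP : ∀ i, P i (j i) := fun i =>
    Nat.findGreatest_spec (P := P i) (Nat.zero_le J) (by simpa [P] using hy1 i)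
  refine ⟨fun i => ⟨j i, Nat.lt_succ_of_le (hjle i)⟩, ?_, fun i => hP i⟩
  by_contra hcon
  push Not at hcon
  simp only at hcon
  have hlt : ∀ i, Real.exp (-(a * ((j i + 1 : ℕ) : ℝ))) < y i := by
    intro i
    by_contra hc
    push Not at hc
    have hji : j i < J := by
      have := Finset.single_le_sum (f := j) (fun i _ => Nat.zero_le _) (Finset.mem_univ i)
      omega
    exact Nat.findGreatest_is_greatest (P := P i) (n := J) (k := j i + 1)
      (Nat.lt_succ_self _) hji hc
  have h1 : ∏ i, Real.exp (-(a * ((j i + 1 : ℕ) : ℝ))) ≤ ∏ i, y i :=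
    Finset.prod_le_prod (fun i _ => (Real.exp_pos _).le) fun i _ => (hlt i).le
  rw [← Real.exp_sum] at h1
  have h2 := Real.exp_lt_exp.1 (h1.trans_lt hprod)
  rw [Finset.sum_neg_distrib, ← Finset.mul_sum, neg_lt_neg_iff, mul_lt_mul_iff_right₀ ha,
    ← Nat.cast_sum, Nat.cast_lt, Finset.sum_add_distrib] at h2
  simp at h2
  omega

lemma upper_reduce (m : ℕ) (β : Fin (m+1) → ℝ) (hβ : ∀ i, 1 < β i) {L : ℝ} (hL0 : 0 < L)
    (hL : ∀ i, Real.log (β i) ≤ L) (ψ : ℕ → ℝ) {T0 : ℝ} (hT0 : 0 < T0)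
    (hev : ∀ᶠ n : ℕ in atTop, ψ n < Real.exp (-(n * T0))) {θ : NNReal}
    (hθ : L < θ * (T0 + L)) :
    dimH {x : Fin (m+1) → ℝ | (∀ i, x i ∈ Set.Ico (0 : ℝ) 1) ∧
        (∃ᶠ n in atTop, (∏ i, tdist ((betaT (β i))^[n] (x i)) (x i)) < ψ n)} ≤
      (m : ℝ≥0∞) + θ := by
  classical
  have hθ0 : 0 < (θ : ℝ) := by
    by_contra hc
    have : (θ : ℝ) = 0 := le_antisymm (not_lt.1 hc) θ.coe_nonneg
    rw [this] at hθ
    linarith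
  obtain ⟨J, hJ⟩ := exists_nat_gt (max 1 (θ * (m+1) * T0 / (θ * (T0 + L) - L)))
  have hJ1 : (1:ℝ) < J := (le_max_left _ _).trans_lt hJ
  have hJ2 := (le_max_right _ _).trans_lt hJ
  have hJ0 : (0:ℝ) < J := by linarith
  rw [div_lt_iff₀ (by linarith)] at hJ2
  have hε : 0 < T0 / J := by positivity
  set E : (Fin (m+1) → Fin (J+1)) → Set (Fin (m+1) → ℝ) := fun j =>
    {x | (∀ i, x i ∈ Set.Ico (0 : ℝ) 1) ∧ (∃ᶠ n : ℕ in atTop,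
      ∀ i, tdist ((betaT (β i))^[n] (x i)) (x i) ≤
        Real.exp (-(n * (T0 / J * ((j i : ℕ) : ℝ)))))} with hE
  have hsub : {x : Fin (m+1) → ℝ | (∀ i, x i ∈ Set.Ico (0 : ℝ) 1) ∧
        (∃ᶠ n in atTop, (∏ i, tdist ((betaT (β i))^[n] (x i)) (x i)) < ψ n)} ⊆
      ⋃ j : {j : Fin (m+1) → Fin (J+1) // J ≤ ∑ i, (j i : ℕ) + (m+1)}, E j := by
    rintro x ⟨hx, hf⟩
    have h1 : ∃ᶠ n : ℕ in atTop, ∃ j : {j : Fin (m+1) → Fin (J+1) // J ≤ ∑ i, (j i : ℕ) + (m+1)},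
        ∀ i, tdist ((betaT (β i))^[n] (x i)) (x i) ≤
          Real.exp (-(n * (T0 / J * ((j.1 i : ℕ) : ℝ)))) := by
      refine (hf.and_eventually (hev.and (eventually_ge_atTop 1))).mono ?_
      rintro n ⟨hn, hn2, hn1⟩
      have hn0 : (0:ℝ) < n := by exact_mod_cast hn1
      obtain ⟨j, hj, hj2⟩ := exists_exponents m J (a := n * (T0 / J)) (by positivity)
        (fun i => tdist ((betaT (β i))^[n] (x i)) (x i)) (fun i => tdist_le_one _ _)
        (by
          refine (hn.trans hn2).trans_le (le_of_eq ?_)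
          congr 2
          field_simp)
      exact ⟨⟨j, hj⟩, fun i => by simpa only [mul_assoc] using hj2 i⟩
    have h2 : ∃ j : {j : Fin (m+1) → Fin (J+1) // J ≤ ∑ i, (j i : ℕ) + (m+1)},
        ∃ᶠ n : ℕ in atTop, ∀ i, tdist ((betaT (β i))^[n] (x i)) (x i) ≤
          Real.exp (-(n * (T0 / J * ((j.1 i : ℕ) : ℝ)))) := by
      by_contra hc
      push Not at hc
      have hc' := eventually_all.2 hc
      obtain ⟨n, ⟨j, hj⟩, hn⟩ := (h1.and_eventually hc').exists
      obtain ⟨i, hi⟩ := hn j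
      exact absurd (hj i) (not_le.2 hi)
    obtain ⟨j, hj⟩ := h2
    exact Set.mem_iUnion.2 ⟨j, hx, hj⟩
  refine (dimH_mono hsub).trans ?_
  rw [dimH_iUnion]
  refine iSup_le fun j => ?_
  refine upper_E m β hβ hL0 hL _ (fun i => by positivity) ?_
  rw [← Finset.mul_sum]
  have hj : (J : ℝ) ≤ ∑ i, ((j.1 i : ℕ) : ℝ) + (m + 1) := by exact_mod_cast j.2
  have h3 : T0 / J * (J - (m+1)) ≤ T0 / J * ∑ i, ((j.1 i : ℕ) : ℝ) :=
    mul_le_mul_of_nonneg_left (by linarith) hε.le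
  refine lt_of_lt_of_le ?_ (mul_le_mul_of_nonneg_left (add_le_add_left h3 L) hθ0.le)
  have h4 : T0 / J * (J - (m+1)) = T0 - (m+1) * T0 / J := by field_simp
  have h5 : θ * (m+1) * T0 / J < θ * (T0 + L) - L := by
    rw [div_lt_iff₀ hJ0]; linarith
  rw [h4]
  have h6 : (θ:ℝ) * (T0 - (m+1) * T0 / J + L) = θ * (T0 + L) - θ * (m+1) * T0 / J := by ring
  rw [h6]
  linarith

lemma upper_main (m : ℕ) (β : Fin (m+1) → ℝ) (hβ : ∀ i, 1 < β i) {L : ℝ} (hL0 : 0 < L)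
    (hL : ∀ i, Real.log (β i) ≤ L) (ψ : ℕ → ℝ) (hψ : ∀ n, ψ n ∈ Set.Ioc (0 : ℝ) 1)
    {τ : ℝ≥0∞} (hτ : τ = Filter.liminf (fun n : ℕ => ENNReal.ofReal (-Real.log (ψ n) / n)) atTop) :
    dimH {x : Fin (m+1) → ℝ | (∀ i, x i ∈ Set.Ico (0 : ℝ) 1) ∧
        (∃ᶠ n in atTop, (∏ i, tdist ((betaT (β i))^[n] (x i)) (x i)) < ψ n)} ≤
      (m : ℝ≥0∞) + ENNReal.ofReal L / (τ + ENNReal.ofReal L) := by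
  have hLE : ENNReal.ofReal L ≠ 0 := by simpa using hL0
  set x := ENNReal.ofReal L / (τ + ENNReal.ofReal L) with hx
  have hxtop : x ≠ ⊤ := ENNReal.div_ne_top ENNReal.ofReal_ne_top (by simp [hL0])
  refine ENNReal.le_of_forall_pos_le_add fun ε hε _ => ?_
  set θ : NNReal := x.toNNReal + ε with hθ
  have hθx : (θ : ℝ≥0∞) = x + ε := by rw [hθ, ENNReal.coe_add, ENNReal.coe_toNNReal hxtop]
  rw [add_assoc, ← hθx]
  by_cases h1 : 1 ≤ θ
  · refine (dimH_mono (Set.subset_univ _)).trans ?_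
    rw [Real.dimH_univ_pi_fin]
    push_cast
    gcongr
    exact_mod_cast h1
  push Not at h1
  have hθ0 : 0 < θ := by positivity
  have hθ0' : (0:ℝ) < θ := hθ0
  have h1' : (θ:ℝ) < 1 := h1
  have hlt : x < θ := by rw [hθx]; exact ENNReal.lt_add_right hxtop (by simpa using hε.ne')
  have hT1 : ENNReal.ofReal (L * (1 - θ) / θ) < τ := by
    induction τ with
    | top => simp
    | coe t =>
      rw [hx, ENNReal.div_lt_iff (by simp [hL0]) (by simp)] at hlt
      have h2 : ENNReal.ofReal L < ENNReal.ofReal (θ * (t + L)) := by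
        convert hlt using 1
        rw [ENNReal.ofReal_mul hθ0'.le, ENNReal.ofReal_add t.coe_nonneg hL0.le,
          ENNReal.ofReal_coe_nnreal, ENNReal.ofReal_coe_nnreal]
      have h3 := (ENNReal.ofReal_lt_ofReal_iff_of_nonneg hL0.le).1 h2
      rw [← ENNReal.ofReal_coe_nnreal (p := t)]
      have h4 : L * (1 - θ) / θ < t := by
        rw [div_lt_iff₀ hθ0']; nlinarith
      exact (ENNReal.ofReal_lt_ofReal_iff_of_nonneg
        (div_nonneg (mul_nonneg hL0.le (by linarith)) hθ0'.le)).2 h4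
  have hT1pos : 0 < L * (1 - θ) / θ := div_pos (mul_pos hL0 (by linarith)) hθ0'
  obtain ⟨T0, hT0a, hT0b⟩ := ENNReal.lt_iff_exists_nnreal_btwn.1 hT1
  have hT0c : L * (1 - θ) / θ < T0 := by
    rw [← ENNReal.ofReal_coe_nnreal] at hT0a
    exact (ENNReal.ofReal_lt_ofReal_iff_of_nonneg hT1pos.le).1 hT0a
  rw [hτ] at hT0b
  have hev := eventually_lt_of_lt_liminf hT0b
  refine upper_reduce m β hβ hL0 hL ψ (hT1pos.trans hT0c) ?_ ?_
  · filter_upwards [hev, eventually_ge_atTop 1] with n hn hn1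
    have hn0 : (0:ℝ) < n := by exact_mod_cast hn1
    rw [← ENNReal.ofReal_coe_nnreal] at hn
    have := (ENNReal.ofReal_lt_ofReal_iff_of_nonneg T0.coe_nonneg).1 hn
    rw [lt_div_iff₀ hn0] at this
    rw [← Real.log_lt_iff_lt_exp (hψ n).1]
    linarith
  · rw [div_lt_iff₀ hθ0'] at hT0c
    nlinarith

lemma lower_main (m : ℕ) (β : Fin (m+1) → ℝ) (hβ : ∀ i, 1 < β i) {L : ℝ}
    (hL : L = Real.log (β (Fin.last m))) (ψ : ℕ → ℝ) (hψ : ∀ n, ψ n ∈ Set.Ioc (0 : ℝ) 1)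
    {τ : ℝ≥0∞} (hτ : τ = Filter.liminf (fun n : ℕ => ENNReal.ofReal (-Real.log (ψ n) / n)) atTop) :
    (m : ℝ≥0∞) + ENNReal.ofReal L / (τ + ENNReal.ofReal L) ≤
    dimH {x : Fin (m+1) → ℝ | (∀ i, x i ∈ Set.Ico (0 : ℝ) 1) ∧
        (∃ᶠ n in atTop, (∏ i, tdist ((betaT (β i))^[n] (x i)) (x i)) < ψ n)} := by
  have hL0 : 0 < L := hL ▸ Real.log_pos (hβ _)
  have hmem : ∀ φ : ℝ → ℝ, (∀ u ∈ Set.Ico (0:ℝ) 1, φ u ∈ Set.Ico (0:ℝ) 1 ∧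
        ∃ᶠ n in atTop, tdist ((betaT (β (Fin.last m)))^[n] (φ u)) (φ u) < ψ n) →
      ∀ w : Fin (m+1) → ℝ, (∀ i, w i ∈ Set.Ico (0:ℝ) 1) →
      (fun i => if i = Fin.last m then φ (w i) else w i) ∈
        {x : Fin (m+1) → ℝ | (∀ i, x i ∈ Set.Ico (0 : ℝ) 1) ∧
        (∃ᶠ n in atTop, (∏ i, tdist ((betaT (β i))^[n] (x i)) (x i)) < ψ n)} := by
    intro φ hφ w hw
    refine ⟨fun i => ?_, ?_⟩
    · by_cases h : i = Fin.last m
      · simpa [h] using (hφ _ (hw (Fin.last m))).1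
      · simpa [h] using hw i
    · refine (hφ _ (hw (Fin.last m))).2.mono fun n hn => ?_
      rw [Fin.prod_univ_castSucc]
      refine lt_of_le_of_lt ?_ hn
      simp only [if_true]
      refine mul_le_of_le_one_left (tdist_nonneg _ _) ?_
      exact Finset.prod_le_one (fun i _ => tdist_nonneg _ _) fun i _ => tdist_le_one _ _
  by_cases htop : τ = ⊤
  · have := lower_dim m (s := 0) (fun _ => 0) _ (hmem (fun _ => 0) fun u _ => ⟨by simp, by
      refine Eventually.frequently (Eventually.of_forall fun n => ?_)
      have h0 : (betaT (β (Fin.last m)))^[n] 0 = 0 :=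
        Function.iterate_fixed (by simp [betaT]) n
      rw [h0]
      refine lt_of_le_of_lt (tdist_le 0 0 0) ?_
      simpa using (hψ n).1⟩) (by
        intro u hu v hv
        simp only [NNReal.coe_zero, Real.rpow_zero]
        rw [abs_le]
        constructor <;> linarith [hu.1, hu.2, hv.1, hv.2])
    simpa [htop] using this
  lift τ to NNReal using htop
  set x := ENNReal.ofReal L / (τ + ENNReal.ofReal L) with hx
  have hxtop : x ≠ ⊤ := ENNReal.div_ne_top ENNReal.ofReal_ne_top (by simp [hL0])
  have hx0 : x ≠ 0 := (ENNReal.div_pos (by simpa using hL0) (by simp)).ne'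
  refine ENNReal.le_of_forall_pos_le_add fun ε hε _ => ?_
  set s : NNReal := x.toNNReal - ε with hs
  have hxs : x ≤ s + ε := by
    rw [← ENNReal.coe_toNNReal hxtop]
    exact_mod_cast le_tsub_add
  have hsx : (s : ℝ≥0∞) < x := by
    rw [← ENNReal.coe_toNNReal hxtop]
    exact_mod_cast tsub_lt_self (ENNReal.toNNReal_pos hx0 hxtop) hε
  have hs1 : (s : ℝ) * (τ + L) < L := by
    rw [hx, ENNReal.lt_div_iff_mul_lt (by simp [hL0]) (by simp)] at hsx
    have h2 : ENNReal.ofReal (s * (τ + L)) < ENNReal.ofReal L := by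
      convert hsx using 1
      rw [ENNReal.ofReal_mul s.coe_nonneg, ENNReal.ofReal_add τ.coe_nonneg hL0.le,
          ENNReal.ofReal_coe_nnreal, ENNReal.ofReal_coe_nnreal]
    exact (ENNReal.ofReal_lt_ofReal_iff_of_nonneg (by positivity)).1 h2
  obtain ⟨τ', hτ1, hτ2⟩ : ∃ τ' : ℝ, τ < τ' ∧ s * (τ' + L) < L := by
    refine ⟨τ + (L - s * (τ + L)) / (s + 1), ?_, ?_⟩
    · have : 0 < (L - s * (τ + L)) / ((s:ℝ) + 1) := div_pos (by linarith) (by positivity)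
      linarith
    · have hsp : (0:ℝ) < s + 1 := by positivity
      have h3 : (s:ℝ) * ((L - s * (τ + L)) / (s + 1)) < L - s * (τ + L) := by
        rw [← mul_div_assoc, div_lt_iff₀ hsp]
        nlinarith
      linarith
  have hτ0 : 0 ≤ τ' := τ.coe_nonneg.trans hτ1.le
  have hfreq : ∃ᶠ n : ℕ in atTop, Real.exp (-(n * τ')) ≤ ψ n := by
    have h5 : Filter.liminf (fun n : ℕ => ENNReal.ofReal (-Real.log (ψ n) / n)) atTop <
        ENNReal.ofReal τ' := by
      rw [← hτ, ← ENNReal.ofReal_coe_nnreal]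
      exact (ENNReal.ofReal_lt_ofReal_iff_of_nonneg τ.coe_nonneg).2 hτ1
    refine ((frequently_lt_of_liminf_lt (by isBoundedDefault) h5).and_eventually
      (eventually_ge_atTop 1)).mono ?_
    rintro n ⟨hn, hn1⟩
    have hn0 : (0:ℝ) < n := by exact_mod_cast hn1
    have h6 := (ENNReal.ofReal_lt_ofReal_iff'.1 hn).1
    rw [div_lt_iff₀ hn0] at h6
    rw [← Real.le_log_iff_exp_le (hψ n).1]
    linarith
  obtain ⟨φ, hφ1, hφ2⟩ := exists_phi (hβ (Fin.last m)) hψ hτ0 hfreq s.coe_nonneg (hL ▸ hτ2)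
  have := lower_dim m (s := s) φ _ (hmem φ hφ1) hφ2
  calc (m : ℝ≥0∞) + x ≤ m + (s + ε) := by gcongr
    _ = m + s + ε := by rw [add_assoc]
    _ ≤ _ := by gcongr

/-- **Theorem (modified shrinking target, multiplicative form).**
For `1 < β_1 ≤ ⋯ ≤ β_d` and `ψ : ℕ → (0,1]`, the Hausdorff dimension of
`H_d(T,ψ) = {x ∈ 𝕋^d : ∏_i |T_{β_i}^n(x_i) - x_i| < ψ(n) for infinitely many n}`
is `d - 1 + log β_d / (τ + log β_d)`, where `τ = liminf (-log ψ(n))/n`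
(the fraction being `0` when `τ = ∞`, as encoded by `ℝ≥0∞` arithmetic). -/
theorem dimH_multiplicative_shrinking_target
    (d : ℕ) (hd : 1 ≤ d) (β : Fin d → ℝ) (hβ : ∀ i, 1 < β i) (hmono : Monotone β)
    (ψ : ℕ → ℝ) (hψ : ∀ n, ψ n ∈ Set.Ioc (0 : ℝ) 1) :
    dimH {x : Fin d → ℝ | (∀ i, x i ∈ Set.Ico (0 : ℝ) 1) ∧
        (∃ᶠ n in atTop, (∏ i, tdist ((betaT (β i))^[n] (x i)) (x i)) < ψ n)} =
      ((d : ℝ≥0∞) - 1) +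
        ENNReal.ofReal (Real.log (β ⟨d - 1, by omega⟩)) /
          (Filter.liminf (fun n : ℕ => ENNReal.ofReal (-Real.log (ψ n) / n)) atTop +
            ENNReal.ofReal (Real.log (β ⟨d - 1, by omega⟩))) := by
  obtain ⟨m, rfl⟩ : ∃ m, d = m + 1 := ⟨d - 1, by omega⟩
  have hlast : (⟨m + 1 - 1, by omega⟩ : Fin (m+1)) = Fin.last m := by ext; simp
  have hm : ((m + 1 : ℕ) : ℝ≥0∞) - 1 = m := by
    push_cast
    exact ENNReal.add_sub_cancel_right ENNReal.one_ne_top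
  rw [hlast, hm]
  apply le_antisymm
  · exact upper_main m β hβ (Real.log_pos (hβ _))
      (fun i => Real.log_le_log (by linarith [hβ i]) (hmono (Fin.le_last i))) ψ hψ rfl
  · exact lower_main m β hβ rfl ψ hψ rfl
end

section
/- Let β > 1, let {f_n}_{n≥1} be a sequence of maps 𝕋 → 𝕋 with a uniform Lipschitz constant, let ψ : ℕ → (0,1], and set τ := liminf_{n→∞} (−log ψ(n))/n. Then the Hausdorff dimension of the set {x ∈ 𝕋 : |T_β^n(x) − f_n(x)| < ψ(n) for infinitely many n ∈ ℕ} equals (log β)/(log β + τ), interpreted as 0 when τ = ∞. -/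
open Filter MeasureTheory
open scoped ENNReal

lemma exists_seq_rel {α : Type*} (Q : α → Prop) (R : α → α → Prop) (x0 : α) (h0 : Q x0)
    (h : ∀ x, Q x → ∃ y, Q y ∧ R x y) :
    ∃ g : ℕ → α, g 0 = x0 ∧ ∀ i, Q (g i) ∧ R (g i) (g (i+1)) := by
  choose! F hF using h
  have key : ∀ i, Q (F^[i] x0) := by
    intro i
    induction i with
    | zero => exact h0
    | succ i ih => rw [Function.iterate_succ_apply']; exact (hF _ ih).1
  refine ⟨fun i => F^[i] x0, rfl, fun i => ⟨key i, ?_⟩⟩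
  simp only [Function.iterate_succ_apply']
  exact (hF _ (key i)).2

/-- the recursive coding: `(left endpoint, remaining fractional part)`. -/
noncomputable def codeState (m : ℕ → ℕ) (L : ℕ → ℝ) (X : ℕ → ℝ → ℝ) (t : ℝ) : ℕ → ℝ × ℝ
  | 0 => (0, t)
  | i + 1 =>
    (X i ((codeState m L X t i).1 + 2 * (⌊(m i : ℝ) * (codeState m L X t i).2⌋ : ℝ) * L (i+1)),
      Int.fract ((m i : ℝ) * (codeState m L X t i).2))

lemma holder_arith {s r P Δ D : ℝ} (hs0 : 0 < s) (hs1 : s ≤ 1) (hr : 0 < r) (hP : 0 < P)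
    (hΔ : 0 ≤ Δ) (hPr : 1 ≤ P * r ^ s) (hPΔ : P * Δ ≤ 1) (hD : r * (P * Δ) / 8 ≤ D) :
    Δ ≤ 8 * D ^ s := by
  have h0 : 0 ≤ P * Δ := by positivity
  have hD0 : 0 ≤ D := le_trans (by positivity) hD
  have h1 : P * Δ ≤ (P * Δ) ^ s := by
    conv_lhs => rw [← Real.rpow_one (P * Δ)]
    exact Real.rpow_le_rpow_of_exponent_ge' h0 hPΔ hs0.le hs1
  have h2 : (r * (P * Δ)) ^ s ≤ (8 * D) ^ s :=
    Real.rpow_le_rpow (by positivity) (by linarith) hs0.le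
  rw [Real.mul_rpow hr.le h0, Real.mul_rpow (by norm_num) hD0] at h2
  have h3 : (8:ℝ) ^ s ≤ 8 := by
    conv_rhs => rw [← Real.rpow_one 8]
    exact Real.rpow_le_rpow_of_exponent_le (by norm_num) hs1
  have h4 : 0 ≤ D ^ s := by positivity
  have h5 : 0 < r ^ s := by positivity
  calc Δ ≤ (P * r ^ s) * Δ := by nlinarith
    _ = r ^ s * (P * Δ) := by ring
    _ ≤ r ^ s * (P * Δ) ^ s := by gcongr
    _ ≤ 8 ^ s * D ^ s := h2
    _ ≤ 8 * D ^ s := by gcongr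

section coding
variable {m : ℕ → ℕ} {L r : ℕ → ℝ} {X : ℕ → ℝ → ℝ}

lemma code_w (t : ℝ) (ht : t ∈ Set.Ico (0:ℝ) 1) (i : ℕ) :
    (codeState m L X t i).2 ∈ Set.Ico (0:ℝ) 1 := by
  cases i with
  | zero => exact ht
  | succ i => exact ⟨Int.fract_nonneg _, Int.fract_lt_one _⟩

lemma code_digit (t : ℝ) (ht : t ∈ Set.Ico (0:ℝ) 1) (i : ℕ) (hm : 0 < m i) :
    (0:ℝ) ≤ (⌊(m i : ℝ) * (codeState m L X t i).2⌋ : ℝ) ∧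
    (⌊(m i : ℝ) * (codeState m L X t i).2⌋ : ℝ) + 1 ≤ m i := by
  have hw := code_w (m := m) (L := L) (X := X) t ht i
  have hm' : (0:ℝ) < m i := by exact_mod_cast hm
  constructor
  · have : 0 ≤ ⌊(m i : ℝ) * (codeState m L X t i).2⌋ := Int.floor_nonneg.2 (mul_nonneg hm'.le hw.1)
    exact_mod_cast this
  · have : ⌊(m i : ℝ) * (codeState m L X t i).2⌋ < (m i : ℤ) := by
      rw [Int.floor_lt]; push_cast; nlinarith [hw.2]
    exact_mod_cast this

lemma code_step (hm : ∀ i, 0 < m i) (hL : ∀ i, 0 < L (i+1))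
    (hmL : ∀ i, (m i : ℝ) * (2 * L (i+1)) ≤ r i) (hr0 : r 0 = 1)
    (hX : ∀ i v, 0 ≤ v → v + L (i+1) ≤ 1 → v ≤ X i v ∧ X i v + r (i+1) ≤ v + L (i+1))
    (t : ℝ) (ht : t ∈ Set.Ico (0:ℝ) 1) (i : ℕ) :
    0 ≤ (codeState m L X t i).1 ∧ (codeState m L X t i).1 + r i ≤ 1 := by
  induction i with
  | zero => simp [codeState, hr0]
  | succ i ih =>
    obtain ⟨h1, h2⟩ := ih
    obtain ⟨d0, d1⟩ := code_digit (m := m) (L := L) (X := X) t ht i (hm i)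
    have := hL i
    have := hmL i
    have a0 : 0 ≤ (⌊(m i : ℝ) * (codeState m L X t i).2⌋ : ℝ) * L (i+1) := by positivity
    have a1 := mul_le_mul_of_nonneg_right d1 (hL i).le
    have := hX i ((codeState m L X t i).1 +
      2 * (⌊(m i : ℝ) * (codeState m L X t i).2⌋ : ℝ) * L (i+1)) (by nlinarith) (by nlinarith)
    simp only [codeState]
    constructor
    · nlinarith [this.1]
    · nlinarith [this.2]

lemma code_piece (hm : ∀ i, 0 < m i) (hL : ∀ i, 0 < L (i+1))
    (hmL : ∀ i, (m i : ℝ) * (2 * L (i+1)) ≤ r i) (hr0 : r 0 = 1)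
    (hX : ∀ i v, 0 ≤ v → v + L (i+1) ≤ 1 → v ≤ X i v ∧ X i v + r (i+1) ≤ v + L (i+1))
    (t : ℝ) (ht : t ∈ Set.Ico (0:ℝ) 1) (i : ℕ) :
    0 ≤ (codeState m L X t i).1 +
      2 * (⌊(m i : ℝ) * (codeState m L X t i).2⌋ : ℝ) * L (i+1) ∧
    (codeState m L X t i).1 +
      2 * (⌊(m i : ℝ) * (codeState m L X t i).2⌋ : ℝ) * L (i+1) + L (i+1) + L (i+1) ≤
        (codeState m L X t i).1 + r i ∧
    (codeState m L X t i).1 ≤ (codeState m L X t i).1 +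
      2 * (⌊(m i : ℝ) * (codeState m L X t i).2⌋ : ℝ) * L (i+1) := by
  obtain ⟨h1, h2⟩ := code_step hm hL hmL hr0 hX t ht i
  obtain ⟨d0, d1⟩ := code_digit (m := m) (L := L) (X := X) t ht i (hm i)
  have := hL i
  have := hmL i
  have a0 : 0 ≤ (⌊(m i : ℝ) * (codeState m L X t i).2⌋ : ℝ) * L (i+1) := by positivity
  have a1 := mul_le_mul_of_nonneg_right d1 (hL i).le
  refine ⟨by nlinarith, by nlinarith, by nlinarith⟩

lemma code_mono (hm : ∀ i, 0 < m i) (hL : ∀ i, 0 < L (i+1))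
    (hmL : ∀ i, (m i : ℝ) * (2 * L (i+1)) ≤ r i) (hr0 : r 0 = 1)
    (hX : ∀ i v, 0 ≤ v → v + L (i+1) ≤ 1 → v ≤ X i v ∧ X i v + r (i+1) ≤ v + L (i+1))
    (t : ℝ) (ht : t ∈ Set.Ico (0:ℝ) 1) :
    Monotone (fun i => (codeState m L X t i).1) ∧
    Antitone (fun i => (codeState m L X t i).1 + r i) := by
  constructor
  · apply monotone_nat_of_le_succ
    intro i
    obtain ⟨h1, h2, h3⟩ := code_piece hm hL hmL hr0 hX t ht i
    obtain ⟨h4, h5⟩ := code_step hm hL hmL hr0 hX t ht i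
    have := hX i _ h1 (by linarith [hL i])
    simp only [codeState]
    linarith [this.1]
  · apply antitone_nat_of_succ_le
    intro i
    obtain ⟨h1, h2, h3⟩ := code_piece hm hL hmL hr0 hX t ht i
    obtain ⟨h4, h5⟩ := code_step hm hL hmL hr0 hX t ht i
    have := hX i _ h1 (by linarith [hL i])
    simp only [codeState]
    linarith [this.2, hL i]

/-- the coded point -/
noncomputable def codePt (m : ℕ → ℕ) (L : ℕ → ℝ) (X : ℕ → ℝ → ℝ) (t : ℝ) : ℝ :=
  ⨆ i, (codeState m L X t i).1

lemma codePt_mem (hm : ∀ i, 0 < m i) (hL : ∀ i, 0 < L (i+1)) (hr : ∀ i, 0 < r i)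
    (hmL : ∀ i, (m i : ℝ) * (2 * L (i+1)) ≤ r i) (hr0 : r 0 = 1)
    (hX : ∀ i v, 0 ≤ v → v + L (i+1) ≤ 1 → v ≤ X i v ∧ X i v + r (i+1) ≤ v + L (i+1))
    (t : ℝ) (ht : t ∈ Set.Ico (0:ℝ) 1) (i : ℕ) :
    (codeState m L X t i).1 ≤ codePt m L X t ∧
    codePt m L X t ≤ (codeState m L X t i).1 + r i := by
  obtain ⟨hmono, hanti⟩ := code_mono hm hL hmL hr0 hX t ht
  have key : ∀ i j, (codeState m L X t j).1 ≤ (codeState m L X t i).1 + r i := by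
    intro i j
    have h1 := hmono (le_max_left j i)
    have h2 := hanti (le_max_right j i)
    have := hr (max j i)
    simp only at h1 h2
    linarith
  constructor
  · refine le_ciSup (f := fun i => (codeState m L X t i).1) ⟨(codeState m L X t 0).1 + r 0, ?_⟩ i
    rintro _ ⟨j, rfl⟩
    exact key 0 j
  · exact ciSup_le (key i)

lemma codePt_piece (hm : ∀ i, 0 < m i) (hL : ∀ i, 0 < L (i+1)) (hr : ∀ i, 0 < r i)
    (hmL : ∀ i, (m i : ℝ) * (2 * L (i+1)) ≤ r i) (hr0 : r 0 = 1)
    (hX : ∀ i v, 0 ≤ v → v + L (i+1) ≤ 1 → v ≤ X i v ∧ X i v + r (i+1) ≤ v + L (i+1))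
    (t : ℝ) (ht : t ∈ Set.Ico (0:ℝ) 1) (i : ℕ) :
    (codeState m L X t i).1 +
      2 * (⌊(m i : ℝ) * (codeState m L X t i).2⌋ : ℝ) * L (i+1) ≤ codePt m L X t ∧
    codePt m L X t ≤ (codeState m L X t i).1 +
      2 * (⌊(m i : ℝ) * (codeState m L X t i).2⌋ : ℝ) * L (i+1) + L (i+1) := by
  obtain ⟨h1, h2, h3⟩ := code_piece hm hL hmL hr0 hX t ht i
  obtain ⟨h4, h5⟩ := code_step hm hL hmL hr0 hX t ht i
  have h6 := hX i _ h1 (by linarith [hL i])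
  have h7 := codePt_mem hm hL hr hmL hr0 hX t ht (i+1)
  simp only [codeState] at h7
  constructor <;> linarith [h6.1, h6.2, h7.1, h7.2]

lemma code_agree (t t' : ℝ) (i : ℕ)
    (h : ∀ j < i, ⌊(m j : ℝ) * (codeState m L X t j).2⌋ = ⌊(m j : ℝ) * (codeState m L X t' j).2⌋) :
    (codeState m L X t i).1 = (codeState m L X t' i).1 ∧
    (codeState m L X t i).2 - (codeState m L X t' i).2 =
      (∏ j ∈ Finset.range i, (m j : ℝ)) * (t - t') := by
  induction i with
  | zero => simp [codeState]
  | succ i ih =>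
    obtain ⟨h1, h2⟩ := ih (fun j hj => h j (by omega))
    have h3 := h i (by omega)
    simp only [codeState, h1, h3, true_and]
    rw [Finset.prod_range_succ, Int.fract, Int.fract, h3]
    linear_combination (m i : ℝ) * h2

lemma codePt_holder {s : ℝ} (hs0 : 0 < s) (hs1 : s ≤ 1)
    (hm : ∀ i, 2 ≤ m i) (hL : ∀ i, 0 < L (i+1)) (hr : ∀ i, 0 < r i)
    (hmL : ∀ i, (m i : ℝ) * (2 * L (i+1)) ≤ r i) (hr0 : r 0 = 1)
    (hmL' : ∀ i, r i ≤ (m i : ℝ) * (4 * L (i+1)))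
    (hLr : ∀ i, L (i+1) ≤ r i / 4 * (r (i+1)) ^ s)
    (hX : ∀ i v, 0 ≤ v → v + L (i+1) ≤ 1 → v ≤ X i v ∧ X i v + r (i+1) ≤ v + L (i+1))
    (t : ℝ) (ht : t ∈ Set.Ico (0:ℝ) 1) (t' : ℝ) (ht' : t' ∈ Set.Ico (0:ℝ) 1) :
    |t - t'| ≤ 8 * |codePt m L X t - codePt m L X t'| ^ s := by
  have hm0 : ∀ i, 0 < m i := fun i => by have := hm i; omega
  rcases eq_or_ne t t' with rfl | hne
  · simp; positivity
  set P : ℕ → ℝ := fun i => ∏ j ∈ Finset.range i, (m j : ℝ) with hP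
  have hP2 : ∀ i, (2:ℝ) ^ i ≤ P i := by
    intro i
    induction i with
    | zero => simp [hP]
    | succ i ih =>
      simp only [hP, Finset.prod_range_succ, pow_succ] at ih ⊢
      have : (2:ℝ) ≤ m i := by exact_mod_cast hm i
      gcongr
  have hP1 : ∀ i, 1 ≤ P i := fun i => le_trans (one_le_pow₀ (by norm_num)) (hP2 i)
  have hPr : ∀ i, 1 ≤ P i * (r i) ^ s := by
    intro i
    cases i with
    | zero => simp [hP, hr0]
    | succ i =>
      have h1 : P (i+1) = P i * m i := by simp only [hP, Finset.prod_range_succ]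
      rw [h1]
      have h2 := hmL' i
      have h3 := hLr i
      have h4 := hr i
      have h5 : 0 < (r (i+1)) ^ s := Real.rpow_pos_of_pos (hr _) _
      have h6 := hP1 i
      have h7 : (0:ℝ) < m i := by exact_mod_cast hm0 i
      have h8 : r i ≤ r i * (m i * (r (i+1)) ^ s) := by
        calc r i ≤ (m i : ℝ) * (4 * L (i+1)) := h2
          _ ≤ (m i : ℝ) * (4 * (r i / 4 * (r (i+1)) ^ s)) := by gcongr
          _ = _ := by ring
      have h9 : 1 ≤ m i * (r (i+1)) ^ s := by
        by_contra hcon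
        push Not at hcon
        nlinarith
      nlinarith
  have hex : ∃ i, ⌊(m i : ℝ) * (codeState m L X t i).2⌋ ≠
      ⌊(m i : ℝ) * (codeState m L X t' i).2⌋ := by
    by_contra hcon
    push Not at hcon
    have hpos : 0 < |t - t'| := abs_pos.2 (sub_ne_zero.2 hne)
    obtain ⟨i, hi⟩ := pow_unbounded_of_one_lt (1 / |t - t'|) (by norm_num : (1:ℝ) < 2)
    have h1 := (code_agree (m := m) (L := L) (X := X) t t' i (fun j _ => hcon j)).2
    have h2 := code_w (m := m) (L := L) (X := X) t ht i
    have h3 := code_w (m := m) (L := L) (X := X) t' ht' i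
    have h4 : |(codeState m L X t i).2 - (codeState m L X t' i).2| < 1 := by
      rw [abs_lt]; constructor <;> linarith [h2.1, h2.2, h3.1, h3.2]
    rw [h1, abs_mul, abs_of_nonneg (le_trans zero_le_one (hP1 i))] at h4
    rw [div_lt_iff₀ hpos] at hi
    have := mul_le_mul_of_nonneg_right (hP2 i) hpos.le
    simp only [hP] at this
    linarith
  classical
  set i := Nat.find hex with hi
  have hne_i := Nat.find_spec hex
  rw [← hi] at hne_i
  obtain ⟨hu, hw⟩ := code_agree (m := m) (L := L) (X := X) t t' i
    (fun j hj => by simpa using Nat.find_min hex hj)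
  have h2 := code_w (m := m) (L := L) (X := X) t ht i
  have h3 := code_w (m := m) (L := L) (X := X) t' ht' i
  have h4 : |(codeState m L X t i).2 - (codeState m L X t' i).2| < 1 := by
    rw [abs_lt]; constructor <;> linarith [h2.1, h2.2, h3.1, h3.2]
  have hPpos : 0 < P i := lt_of_lt_of_le one_pos (hP1 i)
  have hPΔ : |(codeState m L X t i).2 - (codeState m L X t' i).2| = P i * |t - t'| := by
    rw [hw, abs_mul, abs_of_nonneg hPpos.le]
  have q1 := codePt_piece hm0 hL hr hmL hr0 hX t ht i
  have q2 := codePt_piece hm0 hL hr hmL hr0 hX t' ht' i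
  rw [hu] at q1
  refine holder_arith (r := r i) (P := P i) hs0 hs1 (hr i) hPpos (abs_nonneg _) (hPr i)
    (by rw [← hPΔ]; exact h4.le) ?_
  rw [← hPΔ]
  set w := (codeState m L X t i).2
  set w' := (codeState m L X t' i).2
  set u := (codeState m L X t' i).1
  set d := ⌊(m i : ℝ) * w⌋
  set d' := ⌊(m i : ℝ) * w'⌋
  set x := codePt m L X t
  set x' := codePt m L X t'
  have hd1 : (d:ℝ) ≤ m i * w := Int.floor_le _
  have hd2 : (m i:ℝ) * w < d + 1 := Int.lt_floor_add_one _
  have hd3 : (d':ℝ) ≤ m i * w' := Int.floor_le _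
  have hd4 : (m i:ℝ) * w' < d' + 1 := Int.lt_floor_add_one _
  have hmw := hmL' i
  have hLi := hL i
  have hmi : (0:ℝ) < m i := by exact_mod_cast hm0 i
  -- final estimate
  have main : ∀ (d d' : ℤ) (w w' x x' : ℝ), d < d' → (d:ℝ) ≤ m i * w → (m i:ℝ) * w < d + 1 →
      (d':ℝ) ≤ m i * w' → (m i:ℝ) * w' < d' + 1 →
      x ≤ u + 2 * d * L (i+1) + L (i+1) → u + 2 * d' * L (i+1) ≤ x' →
      r i * |w - w'| / 8 ≤ |x - x'| := by
    intro d d' w w' x x' hdd a1 a2 a3 a4 a5 a6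
    have hdd' : (d:ℝ) + 1 ≤ d' := by exact_mod_cast hdd
    have b1 : w ≤ w' := by nlinarith
    rw [abs_sub_comm w, abs_of_nonneg (sub_nonneg.2 b1)]
    have b2 : m i * (w' - w) ≤ 2 * ((d':ℝ) - d) := by nlinarith
    have b3 : r i * (w' - w) ≤ m i * (4 * L (i+1)) * (w' - w) :=
      mul_le_mul_of_nonneg_right hmw (sub_nonneg.2 b1)
    have b4 : m i * (w' - w) * L (i+1) ≤ 2 * ((d':ℝ) - d) * L (i+1) :=
      mul_le_mul_of_nonneg_right b2 hLi.le
    have b5 : ((d':ℝ) - d) * L (i+1) ≤ x' - x := by nlinarith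
    rw [abs_sub_comm]
    refine le_trans ?_ (le_abs_self _)
    nlinarith
  rcases lt_or_gt_of_ne hne_i with hlt | hlt
  · exact main d d' w w' x x' hlt hd1 hd2 hd3 hd4 q1.2 q2.1
  · rw [abs_sub_comm w, abs_sub_comm x]
    exact main d' d w' w x' x hlt hd3 hd4 hd1 hd2 q2.2 q1.1

end coding

/-- Interval mass transference. -/
theorem dimH_lower_of_intervals {s : NNReal} (hs0 : 0 < s) (hs1 : s ≤ 1) (E : ℕ → Set ℝ)
    (H : ∀ δ : ℝ, 0 < δ → ∀ N : ℕ, ∃ n ≥ N, ∃ L r : ℝ, 0 < r ∧ r ≤ L ∧ L ≤ δ ∧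
      L ≤ δ * r ^ (s:ℝ) ∧ ∀ v, 0 ≤ v → v + L ≤ 1 →
        ∃ x, v ≤ x ∧ x + r ≤ v + L ∧ Set.Icc x (x + r) ⊆ E n) :
    (s : ℝ≥0∞) ≤ dimH {x : ℝ | x ∈ Set.Ico (0:ℝ) 1 ∧ ∃ᶠ n in atTop, x ∈ E n} := by
  obtain ⟨g, hg0, hg⟩ := exists_seq_rel (α := ℕ × ℝ × ℝ) (fun a => 0 < a.2.2)
    (fun a b => a.1 < b.1 ∧ b.2.2 ≤ b.2.1 ∧ b.2.1 ≤ a.2.2 / 4 ∧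
      b.2.1 ≤ a.2.2 / 4 * b.2.2 ^ (s:ℝ) ∧ ∀ v, 0 ≤ v → v + b.2.1 ≤ 1 →
        ∃ x, v ≤ x ∧ x + b.2.2 ≤ v + b.2.1 ∧ Set.Icc x (x + b.2.2) ⊆ E b.1) (0, 1, 1)
    (by norm_num) (by
      rintro ⟨n, L, r⟩ hr
      simp only at hr
      obtain ⟨n', hn', L', r', h1, h2, h3, h4, h5⟩ := H (r / 4) (by positivity) (n+1)
      exact ⟨(n', L', r'), h1, by simp only; omega, h2, h3, h4, h5⟩)
  set n : ℕ → ℕ := fun i => (g i).1 with hn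
  set L : ℕ → ℝ := fun i => (g i).2.1 with hLdef
  set r : ℕ → ℝ := fun i => (g i).2.2 with hrdef
  have hr0 : r 0 = 1 := by simp [hrdef, hg0]
  have hr : ∀ i, 0 < r i := fun i => (hg i).1
  have hnn : ∀ i, n i < n (i+1) := fun i => (hg i).2.1
  have hrL : ∀ i, r (i+1) ≤ L (i+1) := fun i => (hg i).2.2.1
  have hL4 : ∀ i, L (i+1) ≤ r i / 4 := fun i => (hg i).2.2.2.1
  have hLr : ∀ i, L (i+1) ≤ r i / 4 * (r (i+1)) ^ (s:ℝ) := fun i => (hg i).2.2.2.2.1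
  have hXe : ∀ i, ∀ v, 0 ≤ v → v + L (i+1) ≤ 1 →
        ∃ x, v ≤ x ∧ x + r (i+1) ≤ v + L (i+1) ∧ Set.Icc x (x + r (i+1)) ⊆ E (n (i+1)) :=
    fun i => (hg i).2.2.2.2.2
  choose! X hX1 hX2 hX3 using hXe
  have hX : ∀ i v, 0 ≤ v → v + L (i+1) ≤ 1 → v ≤ X i v ∧ X i v + r (i+1) ≤ v + L (i+1) :=
    fun i v h1 h2 => ⟨hX1 i v h1 h2, hX2 i v h1 h2⟩
  have hL : ∀ i, 0 < L (i+1) := fun i => lt_of_lt_of_le (hr _) (hrL i)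
  set m : ℕ → ℕ := fun i => ⌊r i / (2 * L (i+1))⌋₊ with hmdef
  have hq : ∀ i, 2 ≤ r i / (2 * L (i+1)) := by
    intro i
    rw [le_div_iff₀ (by linarith [hL i])]
    linarith [hL4 i]
  have hm : ∀ i, 2 ≤ m i := fun i => Nat.le_floor (by exact_mod_cast hq i)
  have hmL : ∀ i, (m i : ℝ) * (2 * L (i+1)) ≤ r i := by
    intro i
    have := Nat.floor_le (le_trans (by norm_num) (hq i))
    rwa [le_div_iff₀ (by linarith [hL i])] at this
  have hmL' : ∀ i, r i ≤ (m i : ℝ) * (4 * L (i+1)) := by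
    intro i
    have h1 := Nat.lt_floor_add_one (r i / (2 * L (i+1)))
    rw [div_lt_iff₀ (by linarith [hL i])] at h1
    have h2 : (2:ℝ) ≤ m i := by exact_mod_cast hm i
    simp only [hmdef] at h2 ⊢
    nlinarith [hL i]
  have hm0 : ∀ i, 0 < m i := fun i => by have := hm i; omega
  set φ := codePt m L X with hφ
  have hs0' : (0:ℝ) < s := by exact_mod_cast hs0
  have hs1' : (s:ℝ) ≤ 1 := by exact_mod_cast hs1
  have hhol : ∀ t ∈ Set.Ico (0:ℝ) 1, ∀ t' ∈ Set.Ico (0:ℝ) 1,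
      |t - t'| ≤ 8 * |φ t - φ t'| ^ (s:ℝ) := fun t ht t' ht' =>
    codePt_holder hs0' hs1' hm hL hr hmL hr0 hmL' hLr hX t ht t' ht'
  have hinj : Set.InjOn φ (Set.Ico (0:ℝ) 1) := by
    intro t ht t' ht' he
    have := hhol t ht t' ht'
    rw [he, sub_self, abs_zero, Real.zero_rpow hs0'.ne', mul_zero] at this
    exact sub_eq_zero.1 (abs_eq_zero.1 (le_antisymm this (abs_nonneg _)))
  have hmem : φ '' Set.Ico (0:ℝ) 1 ⊆
      {x : ℝ | x ∈ Set.Ico (0:ℝ) 1 ∧ ∃ᶠ n in atTop, x ∈ E n} := by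
    rintro _ ⟨t, ht, rfl⟩
    refine ⟨⟨?_, ?_⟩, ?_⟩
    · exact (codePt_mem hm0 hL hr hmL hr0 hX t ht 0).1
    · have h1 := (codePt_piece hm0 hL hr hmL hr0 hX t ht 0).2
      have h2 := (code_piece hm0 hL hmL hr0 hX t ht 0).2.1
      have h3 := (code_step hm0 hL hmL hr0 hX t ht 0).2
      have := hL 0
      exact lt_of_le_of_lt h1 (by linarith)
    · rw [frequently_atTop]
      intro a
      have hmono : StrictMono n := strictMono_nat_of_lt_succ hnn
      refine ⟨n (a+1), by have := hmono.le_apply (x := a+1); omega, ?_⟩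
      have h1 := codePt_mem hm0 hL hr hmL hr0 hX t ht (a+1)
      obtain ⟨p1, p2, p3⟩ := code_piece hm0 hL hmL hr0 hX t ht a
      have p4 := (code_step hm0 hL hmL hr0 hX t ht a).2
      exact hX3 a _ p1 (by linarith [hL a]) ⟨h1.1, h1.2⟩
  set ginv := Function.invFunOn φ (Set.Ico (0:ℝ) 1) with hginv
  have hleft : ∀ t ∈ Set.Ico (0:ℝ) 1, ginv (φ t) = t := fun t ht => hinj.leftInvOn_invFunOn ht
  have himg : ginv '' (φ '' Set.Ico (0:ℝ) 1) = Set.Ico (0:ℝ) 1 := by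
    rw [Set.image_image]
    ext x
    constructor
    · rintro ⟨t, ht, rfl⟩; simpa [hleft t ht] using ht
    · intro hx; exact ⟨x, hx, hleft x hx⟩
  have hH : HolderOnWith 8 s ginv (φ '' Set.Ico (0:ℝ) 1) := by
    rintro _ ⟨t, ht, rfl⟩ _ ⟨t', ht', rfl⟩
    rw [hleft t ht, hleft t' ht', edist_dist, edist_dist, Real.dist_eq, Real.dist_eq,
      ENNReal.ofReal_rpow_of_nonneg (abs_nonneg _) hs0'.le]
    have : ((8:NNReal) : ℝ≥0∞) = ENNReal.ofReal 8 := by simp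
    rw [this, ← ENNReal.ofReal_mul (by norm_num)]
    exact ENNReal.ofReal_le_ofReal (hhol t ht t' ht')
  have hdim := hH.dimH_image_le hs0
  rw [himg, Real.dimH_of_nonempty_interior (by rw [interior_Ico]; exact ⟨1/2, by norm_num⟩)] at hdim
  rw [ENNReal.le_div_iff_mul_le (by left; exact_mod_cast hs0.ne') (by simp)] at hdim
  rw [Module.finrank_self, Nat.cast_one, one_mul] at hdim
  exact hdim.trans (dimH_mono hmem)

lemma tdist_eq (a b : ℝ) : tdist a b = |a - b - round (a - b)| :=
  le_antisymm (tdist_le a b _) (le_ciInf fun k => round_le _ k)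

lemma tdist_le_abs (a b : ℝ) : tdist a b ≤ |a - b| := by
  simpa using tdist_le a b 0

section beta
variable {β : ℝ}

lemma T_succ (n : ℕ) (x : ℝ) : (betaT β)^[n+1] x = Int.fract (β * (betaT β)^[n] x) := by
  rw [Function.iterate_succ_apply']; rfl

lemma T_mem {x : ℝ} (hx : x ∈ Set.Ico (0:ℝ) 1) (n : ℕ) : (betaT β)^[n] x ∈ Set.Ico (0:ℝ) 1 := by
  cases n with
  | zero => exact hx
  | succ n => rw [T_succ]; exact ⟨Int.fract_nonneg _, Int.fract_lt_one _⟩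

lemma T_le (hβ : 1 < β) {x : ℝ} (hx : x ∈ Set.Ico (0:ℝ) 1) (n : ℕ) :
    (betaT β)^[n] x ≤ β ^ n * x := by
  induction n with
  | zero => simp
  | succ n ih =>
    rw [T_succ]
    have h0 := (T_mem (β := β) hx n).1
    have h1 : Int.fract (β * (betaT β)^[n] x) ≤ β * (betaT β)^[n] x := by
      have : 0 ≤ ⌊β * (betaT β)^[n] x⌋ := Int.floor_nonneg.2 (by positivity)
      have : (0:ℝ) ≤ ⌊β * (betaT β)^[n] x⌋ := by exact_mod_cast this
      rw [Int.fract]; linarith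
    rw [pow_succ]
    nlinarith

lemma T_left (hβ : 1 < β) {x : ℝ} (hx : x ∈ Set.Ico (0:ℝ) 1) (n : ℕ) (y : ℝ) (hyx : y ≤ x)
    (h : β ^ n * (x - y) ≤ (betaT β)^[n] x) :
    (betaT β)^[n] y = (betaT β)^[n] x - β ^ n * (x - y) := by
  induction n with
  | zero => simp
  | succ n ih =>
    have h0 := (T_mem (β := β) hx n).1
    rw [T_succ] at h ⊢
    have h1 : Int.fract (β * (betaT β)^[n] x) ≤ β * (betaT β)^[n] x := by
      have : 0 ≤ ⌊β * (betaT β)^[n] x⌋ := Int.floor_nonneg.2 (by positivity)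
      have : (0:ℝ) ≤ ⌊β * (betaT β)^[n] x⌋ := by exact_mod_cast this
      rw [Int.fract]; linarith
    have h2 : β ^ n * (x - y) ≤ (betaT β)^[n] x := by
      rw [pow_succ] at h
      by_contra hcon
      push Not at hcon
      nlinarith
    rw [ih h2, T_succ, Int.fract_eq_iff]
    have h4 := Int.fract_lt_one (β * (betaT β)^[n] x)
    have h3 : 0 ≤ β ^ (n+1) * (x - y) := mul_nonneg (by positivity) (by linarith)
    refine ⟨by linarith, by linarith, ⌊β * (betaT β)^[n] x⌋, ?_⟩
    rw [Int.fract, pow_succ]; ring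

/-- `b` is a zero of `T^k` of exact level `k`. -/
def LevelPt (β b : ℝ) (k : ℕ) : Prop :=
  b ∈ Set.Ico (0:ℝ) 1 ∧ (betaT β)^[k] b = 0 ∧ ∀ j < k, (betaT β)^[j] b ≠ 0

lemma LevelPt.left (hβ : 1 < β) {b : ℝ} {m : ℕ} (h : LevelPt β b (m+1)) :
    1 ≤ β ^ (m+1) * b ∧ ∀ y < b, β ^ (m+1) * (b - y) ≤ 1 →
      (betaT β)^[m+1] y = 1 - β ^ (m+1) * (b - y) := by
  obtain ⟨hb, h0, hne⟩ := h
  have hm := hne m (by omega)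
  have hpos : 0 < (betaT β)^[m] b := lt_of_le_of_ne (T_mem hb m).1 (Ne.symm hm)
  rw [T_succ, Int.fract_eq_iff] at h0
  obtain ⟨-, -, j, hj⟩ := h0
  have hj0 : (0:ℝ) < j := by rw [← hj]; have : 0 < β := by linarith
                             simp; positivity
  have hj1 : (1:ℝ) ≤ j := by
    have : 0 < j := by exact_mod_cast hj0
    exact_mod_cast this
  have hβT : 1 ≤ β * (betaT β)^[m] b := by linarith
  constructor
  · have := T_le hβ hb m
    rw [pow_succ]; nlinarith
  · intro y hy hy1
    have h2 : β ^ m * (b - y) ≤ (betaT β)^[m] b := by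
      rw [pow_succ] at hy1
      by_contra hcon
      push Not at hcon
      nlinarith
    rw [T_succ, T_left hβ hb m y hy.le h2, Int.fract_eq_iff]
    have h3 : 0 < β ^ (m+1) * (b - y) := mul_pos (by positivity) (by linarith)
    refine ⟨by linarith, by linarith, j - 1, ?_⟩
    push_cast
    rw [← hj, pow_succ]; ring

lemma LevelPt.sep (hβ : 1 < β) {b b' : ℝ} {k : ℕ} (h : LevelPt β b k) (h' : LevelPt β b' k)
    (hlt : b' < b) : 1 ≤ β ^ k * (b - b') := by
  cases k with
  | zero =>
    have h1 : b = 0 := h.2.1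
    have h2 : b' = 0 := h'.2.1
    linarith
  | succ m =>
    by_contra hcon
    push Not at hcon
    have := (h.left hβ).2 b' hlt hcon.le
    rw [h'.2.1] at this
    linarith

lemma LevelPt.eq_of_floor (hβ : 1 < β) {b b' v : ℝ} {k : ℕ} (h : LevelPt β b k)
    (h' : LevelPt β b' k) (hv : v ≤ b) (hv' : v ≤ b')
    (hfl : ⌊β ^ k * (b - v)⌋₊ = ⌊β ^ k * (b' - v)⌋₊) : b = b' := by
  have hp : 0 < β ^ k := by positivity
  have p1 := Nat.floor_le (mul_nonneg hp.le (sub_nonneg.2 hv))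
  have p2 := Nat.lt_floor_add_one (β ^ k * (b - v))
  have p3 := Nat.floor_le (mul_nonneg hp.le (sub_nonneg.2 hv'))
  have p4 := Nat.lt_floor_add_one (β ^ k * (b' - v))
  rw [hfl] at p1 p2
  rcases lt_trichotomy b b' with hlt | heq | hlt
  · have := h'.sep hβ h hlt
    nlinarith
  · exact heq
  · have := h.sep hβ h' hlt
    nlinarith

lemma exists_level {a : ℝ} (ha : a ∈ Set.Ico (0:ℝ) 1) {n : ℕ} (h : (betaT β)^[n] a = 0) :
    ∃ k ≤ n, LevelPt β a k := by
  classical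
  have hex : ∃ k, (betaT β)^[k] a = 0 := ⟨n, h⟩
  exact ⟨Nat.find hex, Nat.find_min' hex h, ha, Nat.find_spec hex, fun j hj => Nat.find_min hex hj⟩

lemma leftPt (hβ : 1 < β) {x : ℝ} (hx : x ∈ Set.Ico (0:ℝ) 1) (n : ℕ) :
    x - (betaT β)^[n] x / β ^ n ∈ Set.Ico (0:ℝ) 1 ∧
    (betaT β)^[n] (x - (betaT β)^[n] x / β ^ n) = 0 := by
  have hp : 0 < β ^ n := by positivity
  have h0 := T_mem (β := β) hx n
  have h1 : 0 ≤ (betaT β)^[n] x / β ^ n := div_nonneg h0.1 hp.le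
  have h2 : β ^ n * (x - (x - (betaT β)^[n] x / β ^ n)) = (betaT β)^[n] x := by
    field_simp; ring
  refine ⟨⟨?_, by linarith [hx.2]⟩, ?_⟩
  · rw [sub_nonneg, div_le_iff₀ hp]
    linarith [T_le hβ hx n]
  · rw [T_left hβ hx n _ (by linarith) h2.le, h2, sub_self]

lemma full_ext (hβ : 1 < β) {a : ℝ} {k : ℕ}
    (h : ∀ u, 0 ≤ u → β ^ k * u < 1 → (betaT β)^[k] (a + u) = β ^ k * u) (q : ℕ) (hq : k ≤ q) :
    ∀ u, 0 ≤ u → β ^ q * u < 1 → (betaT β)^[q] (a + u) = β ^ q * u := by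
  induction q, hq using Nat.le_induction with
  | base => exact h
  | succ q hq ih =>
    intro u hu hu1
    have hp : 0 ≤ β ^ q * u := by positivity
    have e : β ^ (q+1) * u = β * (β ^ q * u) := by rw [pow_succ]; ring
    rw [T_succ, ih u hu (by nlinarith), e, Int.fract_eq_self]
    exact ⟨by positivity, by linarith⟩

lemma count_sep (hβ : 1 < β) (S : Finset ℕ) (a : ℕ → ℝ) (v l : ℝ) (k : ℕ)
    (hinj : Set.InjOn a S) (hS : ∀ j ∈ S, LevelPt β (a j) k) (h1 : ∀ j ∈ S, v ≤ a j)
    (h2 : ∀ j ∈ S, a j ≤ v + l) (hl : 0 ≤ l) : (S.card : ℝ) ≤ β ^ k * l + 1 := by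
  have hp : 0 < β ^ k := by positivity
  have : S.card ≤ (Finset.range (⌊β ^ k * l⌋₊ + 1)).card := by
    apply Finset.card_le_card_of_injOn (fun j => ⌊β ^ k * (a j - v)⌋₊)
    · intro j hj
      simp only [Finset.coe_range, Set.mem_Iio]
      refine Nat.lt_succ_of_le (Nat.floor_le_floor ?_)
      have := h2 j hj
      gcongr; linarith
    · intro i hi j hj hij
      exact hinj hi hj ((hS i hi).eq_of_floor hβ (hS j hj) (h1 i hi) (h1 j hj) hij)
  rw [Finset.card_range] at this
  have h3 : (S.card : ℝ) ≤ ⌊β ^ k * l⌋₊ + 1 := by exact_mod_cast this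
  linarith [Nat.floor_le (mul_nonneg hp.le hl)]

/-- Every interval of length `≥ K (q+1) β^{-q}` contains a full cylinder of order `q`. -/
lemma exists_full (hβ : 1 < β) (M : ℕ) (hM : 2 * β / (β - 1) ≤ β ^ M) (q : ℕ) (hq : M ≤ q) (v : ℝ)
    (hv : 0 ≤ v) (hv1 : v + (β ^ M + 4) * (q + 1) / β ^ q ≤ 1) :
    ∃ a, v ≤ a ∧ a + 1 / β ^ q ≤ v + (β ^ M + 4) * (q + 1) / β ^ q ∧
      ∀ u, 0 ≤ u → β ^ q * u < 1 → (betaT β)^[q] (a + u) = β ^ q * u := by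
  have hβ0 : 0 < β := by linarith
  set h : ℝ := 1 / β ^ q with hh
  have hp : 0 < β ^ q := by positivity
  have hhp : 0 < h := by positivity
  have hqh : β ^ q * h = 1 := by rw [hh]; field_simp
  set J : ℕ := 2 * q + 3 with hJ
  set v' : ℝ := v + β ^ M * h with hv'
  have hMp : 0 < β ^ M := by positivity
  have hend : v' + J * h + h ≤ v + (β ^ M + 4) * (q + 1) / β ^ q := by
    have e : (β ^ M + 4) * (q + 1) / β ^ q = (β ^ M + 4) * (q + 1) * h := by rw [hh]; ring
    rw [e, hv', hJ]
    push_cast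
    have : 0 ≤ β ^ M * h * q := by positivity
    have : 0 ≤ h * q := by positivity
    nlinarith
  set x : ℕ → ℝ := fun j => v' + (j + 1) * h with hx
  have hxmem : ∀ j < J, x j ∈ Set.Ico (0:ℝ) 1 := by
    intro j hj
    have hj' : (j:ℝ) + 1 ≤ J := by exact_mod_cast hj
    have := mul_le_mul_of_nonneg_right hj' hhp.le
    refine ⟨by simp only [hx, hv']; positivity, ?_⟩
    simp only [hx]; linarith
  set a : ℕ → ℝ := fun j => x j - (betaT β)^[q] (x j) / β ^ q with ha
  have hamem : ∀ j < J, v' + j * h < a j ∧ a j ≤ v' + (j + 1) * h := by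
    intro j hj
    have h1 := T_mem (β := β) (hxmem j hj) q
    have h2 : 0 ≤ (betaT β)^[q] (x j) / β ^ q := div_nonneg h1.1 hp.le
    have h3 : (betaT β)^[q] (x j) / β ^ q < h := by
      rw [hh]; exact div_lt_div_of_pos_right h1.2 hp
    simp only [ha, hx] at *
    constructor <;> linarith
  have hlev : ∀ j, j < J → ∃ k ≤ q, LevelPt β (a j) k := by
    intro j hj
    obtain ⟨h1, h2⟩ := leftPt hβ (hxmem j hj) q
    exact exists_level h1 h2
  choose! k hkq hk using hlev
  have hexj : ∃ j < J, q - M < k j := by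
    by_contra hcon
    push Not at hcon
    have hcard := Finset.card_eq_sum_card_fiberwise (s := Finset.range J)
      (t := Finset.range (q - M + 1)) (f := k) (by
        intro j hj
        simp only [Finset.coe_range, Set.mem_Iio] at hj ⊢
        have := hcon j hj; omega)
    rw [Finset.card_range] at hcard
    have hbound : ∀ b ∈ Finset.range (q - M + 1),
        (((Finset.range J).filter (fun j => k j = b)).card : ℝ) ≤ β ^ b * (J * h) + 1 := by
      intro b _
      apply count_sep hβ _ a v' (J * h) b
      · intro i hi j hj hij
        simp only [Finset.coe_filter, Finset.mem_range, Set.mem_ofPred_eq] at hi hj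
        have p1 := hamem i hi.1
        have p2 := hamem j hj.1
        by_contra hne
        rcases lt_or_gt_of_ne hne with hlt | hlt
        · have : (i:ℝ) + 1 ≤ j := by exact_mod_cast hlt
          nlinarith
        · have : (j:ℝ) + 1 ≤ i := by exact_mod_cast hlt
          nlinarith
      · intro j hj
        simp only [Finset.mem_filter, Finset.mem_range] at hj
        rw [← hj.2]; exact hk j hj.1
      · intro j hj
        simp only [Finset.mem_filter, Finset.mem_range] at hj
        have := (hamem j hj.1).1
        have : 0 ≤ j * h := by positivity
        linarith
      · intro j hj
        simp only [Finset.mem_filter, Finset.mem_range] at hj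
        have p := (hamem j hj.1).2
        have hj' : (j:ℝ) + 1 ≤ J := by exact_mod_cast hj.1
        have := mul_le_mul_of_nonneg_right hj' hhp.le
        linarith
      · positivity
    have hsum := Finset.sum_le_sum hbound
    have hcardR : (J:ℝ) = ∑ b ∈ Finset.range (q - M + 1),
        (((Finset.range J).filter (fun j => k j = b)).card : ℝ) := by exact_mod_cast hcard
    rw [← hcardR, Finset.sum_add_distrib, ← Finset.sum_mul, geom_sum_eq hβ.ne'] at hsum
    simp only [Finset.sum_const, Finset.card_range, nsmul_eq_mul, mul_one] at hsum
    have hb1 : 0 < β - 1 := by linarith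
    have hgeom : (β ^ (q - M + 1) - 1) / (β - 1) * h ≤ 1 / 2 := by
      have e : β ^ (q - M) * β ^ M = β ^ q := by rw [← pow_add]; congr 1; omega
      rw [div_le_iff₀ hb1] at hM
      rw [div_mul_eq_mul_div, div_le_iff₀ hb1]
      have e2 : β ^ (q - M) * (2 * β) * h ≤ β - 1 := by
        calc β ^ (q - M) * (2 * β) * h ≤ β ^ (q - M) * (β ^ M * (β - 1)) * h := by gcongr
          _ = (β ^ q * h) * (β - 1) := by rw [← e]; ring
          _ = β - 1 := by rw [hqh, one_mul]
      rw [pow_succ]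
      nlinarith
    have hqM : ((q - M + 1 : ℕ) : ℝ) ≤ q + 1 := by
      have : q - M + 1 ≤ q + 1 := by omega
      exact_mod_cast this
    have hJ0 : (0:ℝ) ≤ J := by positivity
    have hJr : (J:ℝ) = 2 * q + 3 := by rw [hJ]; push_cast; ring
    have := mul_le_mul_of_nonneg_left hgeom hJ0
    nlinarith
  obtain ⟨j, hjJ, hjk⟩ := hexj
  have hD := hk j hjJ
  have hkq' := hkq j hjJ
  obtain ⟨m, hm⟩ : ∃ m, k j = m + 1 := ⟨k j - 1, by omega⟩
  rw [hm] at hD hkq' hjk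
  obtain ⟨hl1, hl2⟩ := hD.left hβ
  have hkp : 0 < β ^ (m+1) := by positivity
  have hkk : β ^ (m+1) * (1 / β ^ (m+1)) = 1 := by field_simp
  have hsm : 1 / β ^ (m+1) ≤ β ^ M * h := by
    rw [hh, mul_one_div, div_le_div_iff₀ hkp hp, one_mul, ← pow_add]
    exact pow_le_pow_right₀ hβ.le (by omega)
  have hbig : h ≤ 1 / β ^ (m+1) := by
    rw [hh]
    exact one_div_le_one_div_of_le hkp (pow_le_pow_right₀ hβ.le hkq')
  have hja := hamem j hjJ
  have hj' : (j:ℝ) + 1 ≤ J := by exact_mod_cast hjJ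
  have hj2 := mul_le_mul_of_nonneg_right hj' hhp.le
  have hj0 : 0 ≤ j * h := by positivity
  refine ⟨a j - 1 / β ^ (m+1), by linarith, by linarith, ?_⟩
  refine full_ext hβ (k := m+1) ?_ q hkq'
  intro u hu hu1
  have hlt : a j - 1 / β ^ (m+1) + u < a j := by
    have : u < 1 / β ^ (m+1) := by rw [lt_div_iff₀ hkp]; linarith
    linarith
  have e : β ^ (m+1) * (a j - (a j - 1 / β ^ (m+1) + u)) = 1 - β ^ (m+1) * u := by
    linear_combination hkk
  rw [hl2 _ hlt (by rw [e]; have : 0 ≤ β ^ (m+1) * u := by positivity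
                    linarith), e]
  ring

lemma exists_lift {g : ℝ → ℝ} {c a e : ℝ} (hc : 0 < c)
    (hg : ∀ x ∈ Set.Ico (0 : ℝ) 1, ∀ y ∈ Set.Ico (0 : ℝ) 1, tdist (g x) (g y) ≤ c * tdist x y)
    (ha : 0 ≤ a) (hae : a ≤ e) (he : e < 1) (hsmall : c * (e - a) < 1 / 4) :
    ∃ F : ℝ → ℝ, 0 ≤ F a ∧ F a < 1 ∧ (∀ x, ∃ k : ℤ, F x = g x + k) ∧
      ∀ x ∈ Set.Icc a e, ∀ y ∈ Set.Icc a e, |F x - F y| ≤ c * |x - y| := by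
  have hmem : ∀ x ∈ Set.Icc a e, x ∈ Set.Ico (0:ℝ) 1 := fun x hx =>
    ⟨by linarith [hx.1], by linarith [hx.2]⟩
  have hg' : ∀ x ∈ Set.Icc a e, ∀ y ∈ Set.Icc a e, tdist (g x) (g y) ≤ c * |x - y| := by
    intro x hx y hy
    refine (hg x (hmem x hx) y (hmem y hy)).trans ?_
    gcongr
    exact tdist_le_abs x y
  refine ⟨fun x => g x - round (g x - g a) - ⌊g a⌋, ?_, ?_, ?_, ?_⟩
  · simp
  · simp only [sub_self, round_zero, Int.cast_zero, sub_zero]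
    linarith [Int.lt_floor_add_one (g a)]
  · intro x
    exact ⟨- round (g x - g a) - ⌊g a⌋, by push_cast; ring⟩
  · have haa : a ∈ Set.Icc a e := ⟨le_rfl, hae⟩
    have hdev : ∀ x ∈ Set.Icc a e, |g x - g a - round (g x - g a)| < 1 / 4 := by
      intro x hx
      have h1 := hg' x hx a haa
      rw [tdist_eq] at h1
      rw [abs_of_nonneg (sub_nonneg.2 hx.1)] at h1
      have : c * (x - a) ≤ c * (e - a) := by have := hx.2; gcongr
      linarith
    intro x hx y hy
    have h1 := hdev x hx
    have h2 := hdev y hy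
    have h3 := hg' x hx y hy
    refine le_trans ?_ h3
    rw [tdist_eq]
    set k1 := round (g x - g a)
    set k2 := round (g y - g a)
    set k3 := round (g x - g y)
    have h4 : |g x - g y - k3| < 1 / 4 := by
      rw [tdist_eq] at h3
      refine lt_of_le_of_lt h3 (lt_of_le_of_lt ?_ hsmall)
      gcongr
      rw [abs_le]; constructor <;> linarith [hx.1, hx.2, hy.1, hy.2]
    have h5 : k1 - k2 = k3 := by
      rw [abs_lt] at h1 h2 h4
      have q1 : ((k1 - k2 - k3 : ℤ) : ℝ) < 1 := by push_cast; linarith [h1.1, h1.2, h2.1, h2.2, h4.1, h4.2]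
      have q2 : (-1:ℝ) < ((k1 - k2 - k3 : ℤ) : ℝ) := by
        push_cast; linarith [h1.1, h1.2, h2.1, h2.2, h4.1, h4.2]
      have q3 : k1 - k2 - k3 < 1 := by exact_mod_cast q1
      have q4 : -1 < k1 - k2 - k3 := by exact_mod_cast q2
      omega
    have h6 : (k1:ℝ) - k2 = k3 := by exact_mod_cast h5
    rw [← h6]
    apply le_of_eq
    congr 1
    ring

lemma exists_target (hβ : 1 < β) {g : ℝ → ℝ} {c a : ℝ} (hc : 0 < c)
    (hg : ∀ x ∈ Set.Ico (0 : ℝ) 1, ∀ y ∈ Set.Ico (0 : ℝ) 1, tdist (g x) (g y) ≤ c * tdist x y)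
    (q : ℕ) (ha : 0 ≤ a) (ha1 : a + 1 / β ^ q ≤ 1)
    (hfull : ∀ u, 0 ≤ u → β ^ q * u < 1 → (betaT β)^[q] (a + u) = β ^ q * u)
    (hq1 : c / β ^ q < 1 / 4) (hq2 : c / β ^ q < (β - 1) / 2)
    {r p : ℝ} (hr : 0 ≤ r) (hr1 : β ^ (q+1) * r ≤ (β - 1) / 4) (hr2 : (β ^ (q+1) + c) * r < p) :
    ∃ x, a ≤ x ∧ x + r ≤ a + 1 / β ^ q ∧
      ∀ y ∈ Set.Icc x (x + r), y ∈ Set.Ico (0:ℝ) 1 ∧ tdist ((betaT β)^[q+1] y) (g y) < p := by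
  have hβ0 : 0 < β := by linarith
  have hp : 0 < β ^ q := by positivity
  have hp1 : 0 < β ^ (q+1) := by positivity
  set ℓ : ℝ := 1 / β ^ q with hℓ
  have hℓ0 : 0 < ℓ := by positivity
  have hpl : β ^ q * ℓ = 1 := by rw [hℓ]; field_simp
  have hpl1 : β ^ (q+1) * ℓ = β := by rw [pow_succ, mul_right_comm, hpl, one_mul]
  set e : ℝ := a + (1 + β) / 2 / β ^ (q+1) with he
  have hea : β ^ (q+1) * (e - a) = (1 + β) / 2 := by rw [he]; field_simp; ring
  have hae : a ≤ e := by rw [he]; have : 0 ≤ (1 + β) / 2 / β ^ (q+1) := by positivity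
                         linarith
  have hel : e - a < ℓ := by
    by_contra hcon
    push Not at hcon
    nlinarith
  have hcl : c / β ^ q = c * ℓ := by rw [hℓ]; ring
  rw [hcl] at hq1 hq2
  have hcel : c * (e - a) ≤ c * ℓ := by gcongr
  obtain ⟨F, hF0, hF1, hFk, hFL⟩ := exists_lift (g := g) hc hg ha hae (by linarith)
    (lt_of_le_of_lt hcel hq1)
  have hFc : ContinuousOn F (Set.Icc a e) := by
    have : LipschitzOnWith ⟨c, hc.le⟩ F (Set.Icc a e) := by
      apply LipschitzOnWith.of_dist_le_mul
      intro x hx y hy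
      rw [Real.dist_eq, Real.dist_eq]
      exact hFL x hx y hy
    exact this.continuousOn
  have hG : ContinuousOn (fun x => β ^ (q+1) * (x - a) - F x) (Set.Icc a e) := by
    apply ContinuousOn.sub _ hFc
    fun_prop
  have hFe : F e ≤ F a + c * ℓ := by
    have := hFL e ⟨hae, le_rfl⟩ a ⟨le_rfl, hae⟩
    rw [abs_of_nonneg (sub_nonneg.2 hae)] at this
    have := (abs_le.1 this).2
    linarith
  obtain ⟨x0, hx0, hx0e⟩ := intermediate_value_Icc hae hG (show (0:ℝ) ∈ Set.Icc _ _ from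
    ⟨by simpa using hF0, by show 0 ≤ β ^ (q+1) * (e - a) - F e; rw [hea]; linarith⟩)
  replace hx0e : β ^ (q+1) * (x0 - a) - F x0 = 0 := hx0e
  have hx0a : β ^ (q+1) * (x0 - a) ≤ (1 + β) / 2 := by
    rw [← hea]; have := hx0.2; gcongr
  have hxr : x0 + r - a < ℓ := by
    by_contra hcon
    push Not at hcon
    have := mul_le_mul_of_nonneg_left hcon hp1.le
    rw [hpl1] at this
    nlinarith
  refine ⟨x0, hx0.1, by linarith, ?_⟩
  intro y hy
  have hy01 : y ∈ Set.Ico (0:ℝ) 1 := ⟨by linarith [hy.1, hx0.1], by linarith [hy.2]⟩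
  have hx01 : x0 ∈ Set.Ico (0:ℝ) 1 := ⟨by linarith [hx0.1], by linarith⟩
  refine ⟨hy01, ?_⟩
  have hTy : (betaT β)^[q+1] y = β ^ (q+1) * (y - a) - ⌊β * (β ^ q * (y - a))⌋ := by
    have h1 := hfull (y - a) (by linarith [hy.1, hx0.1]) (by
      have : y - a < ℓ := by linarith [hy.2]
      nlinarith)
    rw [add_sub_cancel] at h1
    rw [T_succ, h1, Int.fract, pow_succ]; ring
  obtain ⟨k, hk⟩ := hFk x0
  have hgl := hg y hy01 x0 hx01
  have hgl2 : tdist (g y) (g x0) ≤ c * r := by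
    refine hgl.trans ?_
    gcongr
    refine (tdist_le_abs _ _).trans ?_
    rw [abs_of_nonneg (sub_nonneg.2 hy.1)]; linarith [hy.2]
  rw [tdist_eq] at hgl2
  set k3 := round (g y - g x0)
  set k4 := ⌊β * (β ^ q * (y - a))⌋
  refine lt_of_le_of_lt (tdist_le _ _ (k - k3 - k4)) ?_
  rw [hTy]
  have e1 : β ^ (q+1) * (y - a) - k4 - g y - ((k - k3 - k4 : ℤ) : ℝ) =
      β ^ (q+1) * (y - x0) - (g y - g x0 - k3) := by
    push_cast
    linear_combination hx0e + hk
  rw [e1]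
  refine lt_of_le_of_lt (abs_sub _ _) (lt_of_le_of_lt ?_ hr2)
  have h7 : |β ^ (q+1) * (y - x0)| ≤ β ^ (q+1) * r := by
    rw [abs_of_nonneg (mul_nonneg hp1.le (sub_nonneg.2 hy.1))]
    have := hy.2
    gcongr; linarith
  linarith
end beta

theorem dimH_upper_of_cover {s : NNReal} (hs0 : 0 < s) (E : ℕ → Set ℝ) (ι : ℕ → Type)
    [∀ n, Fintype (ι n)] (U : ∀ n, ι n → Set ℝ) (d : ℕ → ℝ) (hd0 : ∀ n, 0 ≤ d n) (hda : Antitone d)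
    (hdt : Tendsto d atTop (nhds 0)) (N0 : ℕ)
    (hcov : ∀ n ≥ N0, E n ⊆ ⋃ i, U n i)
    (hdiam : ∀ n ≥ N0, ∀ i, Metric.ediam (U n i) ≤ ENNReal.ofReal (d n))
    (hsum : Summable fun n => (Fintype.card (ι n) : ℝ) * d n ^ (s:ℝ)) :
    dimH {x : ℝ | x ∈ Set.Ico (0:ℝ) 1 ∧ ∃ᶠ n in atTop, x ∈ E n} ≤ s := by
  apply dimH_le_of_hausdorffMeasure_ne_top
  set A : Set ℝ := {x : ℝ | x ∈ Set.Ico (0:ℝ) 1 ∧ ∃ᶠ n in atTop, x ∈ E n}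
  have hs0' : (0:ℝ) < s := by exact_mod_cast hs0
  have key := Measure.hausdorffMeasure_le_liminf_tsum (X := ℝ) (β := ℕ)
    (ι := fun N => Σ n, ι (n + (N + N0))) (s:ℝ) A (l := atTop)
    (fun N => ENNReal.ofReal (d (N + N0)))
    (by
      have := (ENNReal.continuous_ofReal.tendsto 0).comp (hdt.comp (tendsto_add_atTop_nat N0))
      rw [ENNReal.ofReal_zero] at this
      exact this)
    (fun N p => U (p.1 + (N + N0)) p.2)
    (by
      refine Eventually.of_forall fun N p => (hdiam _ (by omega) _).trans ?_
      exact ENNReal.ofReal_le_ofReal (hda (by omega)))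
    (by
      refine Eventually.of_forall fun N x hx => ?_
      obtain ⟨n, hn, hxn⟩ := (frequently_atTop.1 hx.2) (N + N0)
      obtain ⟨l, rfl⟩ : ∃ l, n = l + (N + N0) := ⟨n - (N + N0), by omega⟩
      obtain ⟨i, hi⟩ := Set.mem_iUnion.1 (hcov _ (by omega) hxn)
      exact Set.mem_iUnion.2 ⟨⟨l, i⟩, hi⟩)
  refine ne_top_of_le_ne_top ?_ key
  set w : ℕ → ℝ≥0∞ := fun n => ENNReal.ofReal ((Fintype.card (ι n) : ℝ) * d n ^ (s:ℝ)) with hw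
  have hwsum : ∑' n, w n ≠ ⊤ := hsum.tsum_ofReal_ne_top
  refine ne_top_of_le_ne_top hwsum ?_
  refine (liminf_le_liminf (v := fun _ => ∑' n, w n) (Eventually.of_forall fun N => ?_)).trans ?_
  · refine (le_of_eq (ENNReal.tsum_sigma' _)).trans ?_
    calc ∑' n, ∑' i : ι (n + (N + N0)), Metric.ediam (U (n + (N + N0)) i) ^ (s:ℝ)
        ≤ ∑' n, w (n + (N + N0)) := by
          refine ENNReal.tsum_le_tsum fun n => ?_
          rw [tsum_fintype]
          refine (Finset.sum_le_card_nsmul _ _ (ENNReal.ofReal (d (n + (N + N0))) ^ (s:ℝ)) ?_).trans ?_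
          · intro i _
            exact ENNReal.rpow_le_rpow (hdiam _ (by omega) i) hs0'.le
          · rw [hw]
            simp only [Finset.card_univ, nsmul_eq_mul]
            rw [ENNReal.ofReal_mul (by positivity), ENNReal.ofReal_natCast,
              ENNReal.ofReal_rpow_of_nonneg (hd0 _) hs0'.le]
      _ ≤ ∑' n, w n := ENNReal.tsum_comp_le_tsum_of_injective (add_left_injective _) w
  · simp

section final
variable {β c : ℝ} {f : ℕ → ℝ → ℝ} {ψ : ℕ → ℝ}

lemma upper_bound (hβ : 1 < β) (hc : 0 < c)
    (hf : ∀ n : ℕ, ∀ x ∈ Set.Ico (0 : ℝ) 1, ∀ y ∈ Set.Ico (0 : ℝ) 1,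
      tdist (f n x) (f n y) ≤ c * tdist x y)
    {s : NNReal} (hs0 : 0 < s) {τ : ℝ} (hτ : 0 ≤ τ) (hcond : Real.log β < s * (Real.log β + τ))
    (hev : ∀ᶠ n : ℕ in atTop, ψ n ≤ Real.exp (-τ * n)) :
    dimH {x : ℝ | x ∈ Set.Ico (0 : ℝ) 1 ∧
        (∃ᶠ n in atTop, tdist ((betaT β)^[n] x) (f n x) < ψ n)} ≤ s := by
  classical
  have hβ0 : 0 < β := by linarith
  have hs0' : (0:ℝ) < s := by exact_mod_cast hs0
  set ρ : ℝ := Real.exp (-τ) / β with hρ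
  have hρ0 : 0 < ρ := by positivity
  have hρ1 : ρ < 1 := by
    rw [hρ, div_lt_one hβ0]
    exact lt_of_le_of_lt (Real.exp_le_one_iff.2 (by linarith)) hβ
  have hρn : ∀ n : ℕ, ρ ^ n = Real.exp (-τ * n) / β ^ n := by
    intro n
    rw [hρ, div_pow, ← Real.exp_nat_mul]
    congr 2; ring
  set E : ℕ → Set ℝ := fun n => {x | x ∈ Set.Ico (0:ℝ) 1 ∧
    tdist ((betaT β)^[n] x) (f n x) < ψ n} with hE
  set A : ℕ → ℝ → ℝ := fun n x => x - (betaT β)^[n] x / β ^ n with hA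
  set U : ∀ n, (Fin (n+1) × Fin (⌊β ^ n⌋₊ + 1) × Bool) → Set ℝ := fun n p =>
    {x | x ∈ E n ∧ LevelPt β (A n x) p.1 ∧ ⌊β ^ (p.1:ℕ) * (A n x - 0)⌋₊ = p.2.1 ∧
      decide ((betaT β)^[n] x < 1/2) = p.2.2} with hU
  have hc2 : ∀ᶠ n : ℕ in atTop, 2 * c ≤ β ^ n :=
    (tendsto_pow_atTop_atTop_of_one_lt hβ).eventually_ge_atTop _
  obtain ⟨N0, hN0⟩ := eventually_atTop.1 (hev.and hc2)
  refine (dimH_mono ?_).trans (dimH_upper_of_cover hs0 E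
    (fun n => Fin (n+1) × Fin (⌊β ^ n⌋₊ + 1) × Bool) U (fun n => 4 * ρ ^ n)
    (fun n => by positivity) ?_ ?_ N0 ?_ ?_ ?_)
  · rintro x ⟨hx, hfr⟩
    exact ⟨hx, hfr.mono fun n hn => ⟨hx, hn⟩⟩
  · intro a b hab
    have := pow_le_pow_of_le_one hρ0.le hρ1.le hab
    simp only; linarith
  · simpa using (tendsto_pow_atTop_nhds_zero_of_lt_one hρ0.le hρ1).const_mul 4
  · intro n _ x hx
    obtain ⟨h1, h2⟩ := leftPt hβ hx.1 n
    obtain ⟨k, hkn, hk⟩ := exists_level h1 h2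
    have hfl : ⌊β ^ k * (A n x - 0)⌋₊ < ⌊β ^ n⌋₊ + 1 := by
      refine Nat.lt_succ_of_le (Nat.floor_le_floor ?_)
      have e1 : β ^ k ≤ β ^ n := pow_le_pow_right₀ hβ.le hkn
      have e2 : A n x - 0 ≤ 1 := by rw [sub_zero]; exact h1.2.le
      calc β ^ k * (A n x - 0) ≤ β ^ k * 1 := by gcongr
        _ ≤ β ^ n := by linarith
    exact Set.mem_iUnion.2 ⟨(⟨k, by omega⟩, ⟨_, hfl⟩, decide ((betaT β)^[n] x < 1/2)),
      hx, hk, rfl, rfl⟩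
  · rintro n hn ⟨k, j, b⟩
    obtain ⟨hψn, hcn⟩ := hN0 n hn
    have hp : 0 < β ^ n := by positivity
    apply Metric.ediam_le
    rintro x ⟨hxE, hxk, hxj, hxb⟩ y ⟨hyE, hyk, hyj, hyb⟩
    simp only at hxk hxj hxb hyk hyj hyb
    have hAeq : A n x = A n y := hxk.eq_of_floor hβ hyk hxk.1.1 hyk.1.1 (hxj.trans hyj.symm)
    rw [edist_dist, Real.dist_eq]
    apply ENNReal.ofReal_le_ofReal
    have hlin : (betaT β)^[n] x - (betaT β)^[n] y = β ^ n * (x - y) := by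
      simp only [hA] at hAeq
      field_simp at hAeq
      linarith
    have hxm := T_mem (β := β) hxE.1 n
    have hym := T_mem (β := β) hyE.1 n
    have hhalf : |(betaT β)^[n] x - (betaT β)^[n] y| ≤ 1 / 2 := by
      rw [← hyb, decide_eq_decide] at hxb
      by_cases hx2 : (betaT β)^[n] x < 1 / 2
      · have := hxb.1 hx2
        rw [abs_le]; constructor <;> linarith [hxm.1, hym.1]
      · have := not_lt.1 (fun h => hx2 (hxb.2 h))
        have hx2' := not_lt.1 hx2
        rw [abs_le]; constructor <;> linarith [hxm.2, hym.2]
    have t1 := hxE.2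
    have t2 := hyE.2
    have t3 := (hf n x hxE.1 y hyE.1).trans
      (mul_le_mul_of_nonneg_left (tdist_le_abs x y) hc.le)
    rw [tdist_eq] at t1 t2 t3
    set X := (betaT β)^[n] x
    set Y := (betaT β)^[n] y
    set k1 := round (X - f n x)
    set k2 := round (Y - f n y)
    set k3 := round (f n x - f n y)
    have hK : |X - Y| ≤ |X - Y - ((k1 - k2 + k3 : ℤ) : ℝ)| := by
      rcases eq_or_ne (k1 - k2 + k3) 0 with h0 | h0
      · rw [h0]; simp
      · have h1 : (1:ℝ) ≤ |((k1 - k2 + k3 : ℤ) : ℝ)| := by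
          exact_mod_cast Int.one_le_abs h0
        have h2 := abs_sub_abs_le_abs_sub ((k1 - k2 + k3 : ℤ) : ℝ) (X - Y)
        rw [abs_sub_comm _ (X - Y)] at h2
        linarith
    have hK2 : |X - Y - ((k1 - k2 + k3 : ℤ) : ℝ)| ≤ 2 * ψ n + c * |x - y| := by
      have e : X - Y - ((k1 - k2 + k3 : ℤ) : ℝ) =
          (X - f n x - k1) - (Y - f n y - k2) + (f n x - f n y - k3) := by push_cast; ring
      rw [e]
      have a1 := abs_add_le ((X - f n x - k1) - (Y - f n y - k2)) (f n x - f n y - k3)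
      have a2 := abs_sub (X - f n x - k1) (Y - f n y - k2)
      linarith
    have hfin : β ^ n * |x - y| ≤ 2 * ψ n + c * |x - y| := by
      have : |X - Y| = β ^ n * |x - y| := by rw [hlin, abs_mul, abs_of_pos hp]
      linarith
    rw [hρn, mul_div_assoc', le_div_iff₀ hp]
    nlinarith [abs_nonneg (x - y)]
  · set Q : ℝ := β * ρ ^ (s:ℝ) with hQ
    have hQ0 : 0 < Q := by positivity
    have hQ1 : Q < 1 := by
      have : Q = Real.exp (Real.log β - s * (Real.log β + τ)) := by
        rw [hQ, Real.rpow_def_of_pos hρ0, hρ, Real.log_div (Real.exp_ne_zero _) hβ0.ne',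
          Real.log_exp]
        nth_rewrite 1 [← Real.exp_log hβ0]
        rw [← Real.exp_add]
        congr 1; ring
      rw [this, Real.exp_lt_one_iff]
      linarith
    have hs : Summable fun n : ℕ => (4 * 4 ^ (s:ℝ)) * (((n:ℝ) ^ 1 * Q ^ n) + Q ^ n) := by
      apply Summable.mul_left
      apply Summable.add
      · exact summable_pow_mul_geometric_of_norm_lt_one 1
          (by rw [Real.norm_eq_abs, abs_of_pos hQ0]; exact hQ1)
      · exact summable_geometric_of_lt_one hQ0.le hQ1
    refine Summable.of_nonneg_of_le (fun n => by positivity) (fun n => ?_) hs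
    have hp1 : 1 ≤ β ^ n := one_le_pow₀ hβ.le
    have hcard : (Fintype.card (Fin (n+1) × Fin (⌊β ^ n⌋₊ + 1) × Bool) : ℝ) ≤
        4 * ((n + 1) * β ^ n) := by
      simp only [Fintype.card_prod, Fintype.card_fin, Fintype.card_bool]
      push_cast
      have hfl := Nat.floor_le (le_trans zero_le_one hp1)
      have : ((⌊β ^ n⌋₊ : ℝ) + 1) * 2 ≤ 4 * β ^ n := by linarith
      have hn : (0:ℝ) ≤ (n:ℝ) + 1 := by positivity
      calc _ ≤ ((n:ℝ) + 1) * (4 * β ^ n) := mul_le_mul_of_nonneg_left this hn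
        _ = _ := by ring
    have hpow : (4 * ρ ^ n) ^ (s:ℝ) = 4 ^ (s:ℝ) * (ρ ^ (s:ℝ)) ^ n := by
      rw [Real.mul_rpow (by norm_num) (by positivity), ← Real.rpow_natCast, ← Real.rpow_mul hρ0.le,
        mul_comm (n:ℝ), Real.rpow_mul hρ0.le, Real.rpow_natCast]
    rw [hpow]
    calc _ ≤ 4 * ((n + 1) * β ^ n) * (4 ^ (s:ℝ) * (ρ ^ (s:ℝ)) ^ n) := by gcongr
      _ = _ := by rw [hQ, mul_pow]; ring

set_option maxHeartbeats 2000000 in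
lemma lower_bound (hβ : 1 < β) (hc : 0 < c)
    (hf : ∀ n : ℕ, ∀ x ∈ Set.Ico (0 : ℝ) 1, ∀ y ∈ Set.Ico (0 : ℝ) 1,
      tdist (f n x) (f n y) ≤ c * tdist x y)
    {s : NNReal} (hs0 : 0 < s) {τ : ℝ} (hτ : 0 ≤ τ) (hcond : s * (Real.log β + τ) < Real.log β)
    (hfr : ∃ᶠ n : ℕ in atTop, Real.exp (-τ * n) < ψ n) :
    s ≤ dimH {x : ℝ | x ∈ Set.Ico (0 : ℝ) 1 ∧
        (∃ᶠ n in atTop, tdist ((betaT β)^[n] x) (f n x) < ψ n)} := by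
  have hβ0 : 0 < β := by linarith
  have hb1 : 0 < β - 1 := by linarith
  have hs0' : (0:ℝ) < s := by exact_mod_cast hs0
  have hlb : 0 < Real.log β := Real.log_pos hβ
  have hs1' : (s:ℝ) ≤ 1 := by
    by_contra hcon
    push Not at hcon
    nlinarith
  have hs1 : s ≤ 1 := by exact_mod_cast hs1'
  set ρ : ℝ := Real.exp (-τ) / β with hρ
  have hρ0 : 0 < ρ := by positivity
  have hρn : ∀ n : ℕ, ρ ^ n = Real.exp (-τ * n) / β ^ n := by
    intro n
    rw [hρ, div_pow, ← Real.exp_nat_mul]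
    congr 2; ring
  obtain ⟨M, hM⟩ := (tendsto_pow_atTop_atTop_of_one_lt hβ).eventually_ge_atTop
    (2 * β / (β - 1)) |>.exists
  set κ : ℝ := (β - 1) / (4 * β * (1 + c)) with hκ
  have hκ0 : 0 < κ := by positivity
  have hκe : κ * (4 * β * (1 + c)) = β - 1 := by rw [hκ]; field_simp
  have hκ1 : κ * (1 + c) ≤ 1 / 4 := by
    by_contra hcon
    push Not at hcon
    nlinarith
  have hκc : 0 < κ * c := by positivity
  have hκ2 : κ ≤ (β - 1) / 4 := by
    have h1 : κ ≤ κ * β := by nlinarith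
    have h2 : 0 ≤ κ * β * c := by positivity
    nlinarith
  set K : ℝ := (β ^ M + 4) * β with hK
  have hK1 : 1 ≤ K := by
    have : 0 < β ^ M := by positivity
    rw [hK]; nlinarith
  set Q : ℝ := 1 / (β * ρ ^ (s:ℝ)) with hQ
  have hQ0 : 0 < Q := by positivity
  have hQ1 : Q < 1 := by
    have : β * ρ ^ (s:ℝ) = Real.exp (Real.log β - s * (Real.log β + τ)) := by
      rw [Real.rpow_def_of_pos hρ0, hρ, Real.log_div (Real.exp_ne_zero _) hβ0.ne',
        Real.log_exp]
      nth_rewrite 1 [← Real.exp_log hβ0]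
      rw [← Real.exp_add]
      congr 1; ring
    rw [hQ, this, one_div, ← Real.exp_neg, Real.exp_lt_one_iff]
    linarith
  set E : ℕ → Set ℝ := fun n => {x | tdist ((betaT β)^[n] x) (f n x) < ψ n} with hE
  refine dimH_lower_of_intervals hs0 hs1 E ?_
  intro δ hδ N
  have ev1 : ∀ᶠ n : ℕ in atTop, (n:ℝ) * Q ^ n < δ * κ ^ (s:ℝ) / K :=
    (tendsto_self_mul_const_pow_of_lt_one hQ0.le hQ1).eventually_lt_const (by positivity)
  have ev2 : ∀ᶠ n : ℕ in atTop, max (4 * (c * β)) (2 * (c * β) / (β - 1)) < β ^ n :=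
    (tendsto_pow_atTop_atTop_of_one_lt hβ).eventually_gt_atTop _
  obtain ⟨n, hψn, hn1, hn2, hnN⟩ :=
    (hfr.and_eventually (ev1.and (ev2.and (eventually_ge_atTop (N + M + 1))))).exists
  obtain ⟨q, rfl⟩ : ∃ q, n = q + 1 := ⟨n - 1, by omega⟩
  have hp : 0 < β ^ (q+1) := by positivity
  have hpq : 0 < β ^ q := by positivity
  have hpe : β ^ (q+1) = β ^ q * β := pow_succ _ _
  set x : ℝ := Real.exp (-τ * ((q+1 : ℕ) : ℝ)) with hx
  have hx0 : 0 < x := Real.exp_pos _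
  have hx1 : x ≤ 1 := Real.exp_le_one_iff.2 (by
    have : (0:ℝ) ≤ ((q+1 : ℕ) : ℝ) := by positivity
    nlinarith)
  set r : ℝ := κ * ρ ^ (q+1) with hr
  have hr0 : 0 < r := by positivity
  have hpr : β ^ (q+1) * r = κ * x := by rw [hr, hρn, ← hx]; field_simp
  have hrx : r ≤ κ * x := by
    rw [← hpr]
    have : 1 ≤ β ^ (q+1) := one_le_pow₀ hβ.le
    nlinarith
  have hκx : κ * x ≤ κ := by nlinarith
  have hr1 : r ≤ 1 := by nlinarith
  set L : ℝ := (β ^ M + 4) * (q + 1) / β ^ q with hL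
  have hLK : L = K * ((q+1 : ℕ) : ℝ) / β ^ (q+1) := by
    rw [hL, hK, hpe]; push_cast; field_simp
  have hrs : r ^ (s:ℝ) = κ ^ (s:ℝ) * (ρ ^ (s:ℝ)) ^ (q+1) := by
    rw [hr, Real.mul_rpow hκ0.le (by positivity), ← Real.rpow_natCast ρ, ← Real.rpow_mul hρ0.le,
        mul_comm (((q+1 : ℕ)) : ℝ), Real.rpow_mul hρ0.le, Real.rpow_natCast]
  have hLδ : L ≤ δ * r ^ (s:ℝ) := by
    rw [lt_div_iff₀ (by linarith)] at hn1
    have e : 1 / β ^ (q+1) = Q ^ (q+1) * (ρ ^ (s:ℝ)) ^ (q+1) := by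
      rw [← mul_pow, hQ, ← one_div_pow]
      congr 1
      have : 0 < ρ ^ (s:ℝ) := by positivity
      field_simp
    have e2 : L = ((q+1 : ℕ) : ℝ) * Q ^ (q+1) * K * (ρ ^ (s:ℝ)) ^ (q+1) := by
      rw [hLK, div_eq_mul_one_div, e]; ring
    have hpos : 0 ≤ (ρ ^ (s:ℝ)) ^ (q+1) := by positivity
    have := mul_le_mul_of_nonneg_right hn1.le hpos
    rw [e2, hrs, ← mul_assoc δ]
    exact this
  have hrs1 : r ^ (s:ℝ) ≤ 1 := Real.rpow_le_one hr0.le hr1 hs0'.le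
  refine ⟨q + 1, by omega, L, r, hr0, ?_, ?_, hLδ, ?_⟩
  · rw [hLK, le_div_iff₀ hp, mul_comm r, hpr]
    have : (1:ℝ) ≤ ((q+1 : ℕ) : ℝ) := by push_cast; linarith [Nat.cast_nonneg (α := ℝ) q]
    nlinarith
  · nlinarith
  · intro v hv hvL
    obtain ⟨a, hva, haL, hfull⟩ := exists_full hβ M hM q (by omega) v hv hvL
    have hcq1 : c / β ^ q < 1 / 4 := by
      have := lt_of_le_of_lt (le_max_left _ _) hn2
      rw [hpe] at this
      rw [div_lt_iff₀ hpq]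
      nlinarith
    have hcq2 : c / β ^ q < (β - 1) / 2 := by
      have := lt_of_le_of_lt (le_max_right _ _) hn2
      rw [hpe, div_lt_iff₀ hb1] at this
      rw [div_lt_iff₀ hpq]
      nlinarith
    obtain ⟨y, hy1, hy2, hy3⟩ := exists_target hβ hc (hf (q+1)) q (hv.trans hva)
      (haL.trans hvL) hfull hcq1 hcq2 hr0.le (by rw [hpr]; linarith) (p := ψ (q+1)) (by
        rw [add_mul, hpr]
        have : c * r ≤ c * (κ * x) := by gcongr
        nlinarith)
    exact ⟨y, hva.trans hy1, hy2.trans haL, fun z hz => (hy3 z hz).2⟩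

end final

/-- **One-dimensional modified shrinking target.** For `β > 1`, a uniformly Lipschitz
sequence of maps `f_n : 𝕋 → 𝕋` and `ψ : ℕ → (0,1]`, the Hausdorff dimension of
`{x ∈ 𝕋 : |T_β^n(x) - f_n(x)| < ψ(n) for infinitely many n}` equals
`log β / (log β + τ)` with `τ = liminf (-log ψ(n))/n` (the value being `0` when
`τ = ∞`, as encoded by `ℝ≥0∞` arithmetic). -/
theorem dimH_modified_shrinking_target_dim_one
    (β : ℝ) (hβ : 1 < β) (c : ℝ) (hc : 0 < c) (f : ℕ → ℝ → ℝ)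
    (hf : ∀ n : ℕ, ∀ x ∈ Set.Ico (0 : ℝ) 1, ∀ y ∈ Set.Ico (0 : ℝ) 1,
      tdist (f n x) (f n y) ≤ c * tdist x y)
    (ψ : ℕ → ℝ) (hψ : ∀ n, ψ n ∈ Set.Ioc (0 : ℝ) 1) :
    dimH {x : ℝ | x ∈ Set.Ico (0 : ℝ) 1 ∧
        (∃ᶠ n in atTop, tdist ((betaT β)^[n] x) (f n x) < ψ n)} =
      ENNReal.ofReal (Real.log β) /
        (ENNReal.ofReal (Real.log β) +
          Filter.liminf (fun n : ℕ => ENNReal.ofReal (-Real.log (ψ n) / n)) atTop) := by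
  have hlb : 0 < Real.log β := Real.log_pos hβ
  set τ := Filter.liminf (fun n : ℕ => ENNReal.ofReal (-Real.log (ψ n) / n)) atTop with hτdef
  have hadd : ∀ t : ℝ, 0 ≤ t → ENNReal.ofReal (Real.log β) /
      (ENNReal.ofReal (Real.log β) + ENNReal.ofReal t) =
      ENNReal.ofReal (Real.log β / (Real.log β + t)) := by
    intro t ht
    rw [← ENNReal.ofReal_add hlb.le ht, ENNReal.ofReal_div_of_pos (by linarith)]
  have hcast : ∀ s : NNReal, (s : ℝ≥0∞) = ENNReal.ofReal (s:ℝ) := fun s => by simp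
  apply le_antisymm
  · by_contra hcon
    push Not at hcon
    obtain ⟨s, hs1, hs2⟩ := ENNReal.lt_iff_exists_nnreal_btwn.1 hcon
    have hs0 : 0 < s := by exact_mod_cast lt_of_le_of_lt (zero_le) hs1
    have hs0' : (0:ℝ) < s := by exact_mod_cast hs0
    refine absurd hs2 (not_lt.2 ?_)
    have hev : ∀ τ' : ℝ, 0 ≤ τ' → ENNReal.ofReal τ' < τ →
        ∀ᶠ n : ℕ in atTop, ψ n ≤ Real.exp (-τ' * n) := by
      intro τ' hτ' hlt
      filter_upwards [eventually_lt_of_lt_liminf hlt, eventually_gt_atTop 0] with n hn hn0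
      have hn0' : (0:ℝ) < n := by exact_mod_cast hn0
      have h1 := ((ENNReal.ofReal_lt_ofReal_iff_of_nonneg hτ').1 hn)
      rw [lt_div_iff₀ hn0'] at h1
      rw [← Real.log_le_iff_le_exp (hψ n).1]
      linarith
    rcases eq_or_ne τ ⊤ with htop | htop
    · refine upper_bound hβ hc hf hs0 (τ := Real.log β / s) (by positivity) ?_
        (hev _ (by positivity) (by rw [htop]; exact ENNReal.ofReal_lt_top))
      rw [mul_add, mul_div_cancel₀ _ hs0'.ne']
      nlinarith
    · set t := τ.toReal with ht
      have hτt : τ = ENNReal.ofReal t := (ENNReal.ofReal_toReal htop).symm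
      have ht0 : 0 ≤ t := ENNReal.toReal_nonneg
      rw [hτt, hadd t ht0, hcast s, ENNReal.ofReal_lt_ofReal_iff hs0',
        div_lt_iff₀ (by linarith)] at hs1
      rcases eq_or_lt_of_le ht0 with h0 | hpos
      · refine upper_bound hβ hc hf hs0 (τ := 0) le_rfl (by rw [h0]; exact hs1) ?_
        exact Eventually.of_forall fun n => by simpa using (hψ n).2
      · have hlt : Real.log β / s - Real.log β < t := by
          rw [sub_lt_iff_lt_add, div_lt_iff₀ hs0']; linarith
        have hm0 : 0 ≤ max (t / 2) ((Real.log β / s - Real.log β + t) / 2) :=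
          le_trans (by linarith) (le_max_left _ _)
        have hsl : (s:ℝ) * (Real.log β / s) = Real.log β := by field_simp
        refine upper_bound hβ hc hf hs0
          (τ := max (t / 2) ((Real.log β / s - Real.log β + t) / 2)) hm0 ?_ (hev _ hm0 ?_)
        · have := mul_le_mul_of_nonneg_left
            (le_max_right (t / 2) ((Real.log β / s - Real.log β + t) / 2)) hs0'.le
          nlinarith
        · rw [hτt, ENNReal.ofReal_lt_ofReal_iff hpos]
          exact max_lt (by linarith) (by linarith)
  · refine ENNReal.le_of_forall_nnreal_lt fun s hs => ?_
    rcases eq_or_lt_of_le (zero_le (a := s)) with h0 | hs0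
    · rw [← h0]; simp
    have hs0' : (0:ℝ) < s := by exact_mod_cast hs0
    rcases eq_or_ne τ ⊤ with htop | htop
    · rw [htop] at hs; simp at hs
    set t := τ.toReal with ht
    have hτt : τ = ENNReal.ofReal t := (ENNReal.ofReal_toReal htop).symm
    have ht0 : 0 ≤ t := ENNReal.toReal_nonneg
    rw [hτt, hadd t ht0, hcast s, ENNReal.ofReal_lt_ofReal_iff_of_nonneg hs0'.le,
        lt_div_iff₀ (by linarith)] at hs
    set e : ℝ := (Real.log β - s * (Real.log β + t)) / (2 * s) with he
    have he0 : 0 < e := div_pos (by linarith) (by linarith)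
    have hee : e * (2 * s) = Real.log β - s * (Real.log β + t) := by rw [he]; field_simp
    refine lower_bound hβ hc hf hs0 (τ := t + e) (by linarith) (by nlinarith) ?_
    have hlt : τ < ENNReal.ofReal (t + e) := by
      rw [hτt, ENNReal.ofReal_lt_ofReal_iff (by linarith)]; linarith
    refine ((frequently_lt_of_liminf_lt (by isBoundedDefault) hlt).and_eventually
      (eventually_gt_atTop 0)).mono ?_
    rintro n ⟨hn, hn0⟩
    have hn0' : (0:ℝ) < n := by exact_mod_cast hn0
    have h1 := (ENNReal.ofReal_lt_ofReal_iff (by linarith)).1 hn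
    rw [div_lt_iff₀ hn0'] at h1
    rw [← Real.lt_log_iff_exp_lt (hψ n).1]
    linarith
end
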